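/- arXiv:2309.11229 — 5 statements merged into one kernel-verified Lean document; each statement's English description precedes it below -/
import Mathlib

section
/- Let n be an even positive integer and let f : F → 𝔽₂ be defined by f(x) = tr(x^7). For every a ∈ F with a ≠ 0, the linear kernel E_{D_a f} has cardinality 4 or 16. Moreover: if 3 does not divide n, then |{a ∈ F, a ≠ 0 : |E_{D_a f}| = 4}| = (11·2^{n−2} − 2)/3 and |{a ∈ F, a ≠ 0 : |E_{D_a f}| = 16}| = (2^{n−2} − 1)/3; if 3 divides n, then |{a ∈ F, a ≠ 0 : |E_{D_a f}| = 4}| = (2/3)·(2^n − 1) + (1/2)·wt(tr(x^7)) and |{a ∈ F, a ≠ 0 : |E_{D_a f}| = 16}| = (1/3)·(2^n − 1) − (1/2)·wt(tr(x^7)). -/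
noncomputable section

/-- `Fq n` is the finite field with `2 ^ n` elements. -/
abbrev Fq (n : ℕ) : Type := GaloisField 2 n

/-- The absolute trace map `tr x = x + x^2 + x^4 + ⋯ + x^(2^(n-1))` from `Fq n` to `𝔽₂`. -/
def tr {n : ℕ} (x : Fq n) : ZMod 2 := Algebra.trace (ZMod 2) (Fq n) x

/-- The derivative of `f` with respect to `a`. -/
def der {n : ℕ} (f : Fq n → ZMod 2) (a : Fq n) : Fq n → ZMod 2 :=
  fun x => f x + f (x + a)

/-- Iterated derivatives along a list of directions (head applied last/outermost). -/
def derIter {n : ℕ} (f : Fq n → ZMod 2) : List (Fq n) → (Fq n → ZMod 2)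
  | [] => f
  | a :: as => der (derIter f as) a

/-- `g` has algebraic degree at most `r`: all `(r+1)`-th order derivatives vanish. -/
def degLE {n : ℕ} (g : Fq n → ZMod 2) (r : ℕ) : Prop :=
  ∀ l : List (Fq n), l.length = r + 1 → derIter g l = fun _ => 0

/-- Hamming distance between two Boolean functions on `Fq n`. -/
def hdist {n : ℕ} (f g : Fq n → ZMod 2) : ℕ :=
  {x : Fq n | f x ≠ g x}.ncard

/-- The `r`-th order nonlinearity of `f`. -/
def nl {n : ℕ} (r : ℕ) (f : Fq n → ZMod 2) : ℕ :=
  sInf {d : ℕ | ∃ g : Fq n → ZMod 2, degLE g r ∧ d = hdist f g}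

/-- The linear kernel of `f`: directions along which the derivative is constant. -/
def linKer {n : ℕ} (f : Fq n → ZMod 2) : Set (Fq n) :=
  {b | ∃ c : ZMod 2, ∀ x, der f b x = c}

/-- The weight of a Boolean function on `Fq n`. -/
def wt {n : ℕ} (f : Fq n → ZMod 2) : ℕ := {x : Fq n | f x = 1}.ncard

/-!
Put `c = a ^ 7` and let `B_{c,k}` be the map `x ↦ c * x ^ (2 ^ k) + x`. As the trace is invariant
under squaring, `a * y` lies in the linear kernel of the derivative of `tr (x ^ 7)` in direction
`a ≠ 0` exactly when `(B_{c,1} ∘ B_{c,2} ∘ B_{1,1}) y = 0`. The kernel of this composite is computed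
by additive duality for the trace form: the range of `B_{1,1}` is the kernel of the trace, and the
nonzero element `c⁻¹` of `ker B_{c,1}` is in the range of `B_{c,2}` if and only if the trace
vanishes on `ker B_{c,2}`. Hence the kernel of the composite has `4 * |ker B_{c,2}|` elements if the
trace vanishes on `ker B_{c,2}` and `|ker B_{c,2}|` elements otherwise. In even degree `ker B_{c,2}`
is `e * 𝔽₄` if `c = e⁻³` for some `e`, and trivial otherwise, so the size is always `4` or `16`.

The size is `16` exactly when `a = g⁻³` with `g ^ 7` trace-orthogonal to `𝔽₄`; each such `a` comes
from three `g`. If `g ^ 7` is not orthogonal to `𝔽₄`, exactly two of the three cube roots of unity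
`ζ` satisfy `tr (g ^ 7 * ζ) = 1`; since `g ^ 7 * ζ = (g * ζ) ^ 7`, counting these pairs `(g, ζ)` in
the other order expresses the number of such `g` by the weight of `tr (x ^ 7)`. That weight is
`2 ^ (n - 1)` if `3 ∤ n`, because `7` is then coprime to `2 ^ n - 1`.
-/

section Counting

@[to_additive]
theorem monoidHom_ncard_preimage {G H : Type*} [Group G] [Group H] (f : G →* H) {s : Set H}
    (hs : s ⊆ Set.range f) : (f ⁻¹' s).ncard = Nat.card f.ker * s.ncard := by
  choose r hr using hs
  let e : f ⁻¹' s ≃ f.ker × s :=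
    { toFun x := (⟨(r x.2)⁻¹ * x, by simp [MonoidHom.mem_ker, hr]⟩, ⟨f x, x.2⟩)
      invFun y := ⟨r y.2.2 * y.1, by simp [MonoidHom.mem_ker.1 y.1.2, hr]⟩
      left_inv x := by simp
      right_inv y := by ext <;> simp [MonoidHom.mem_ker.1 y.1.2, hr] }
  rw [← Nat.card_coe_set_eq, ← Nat.card_coe_set_eq, Nat.card_congr e, Nat.card_prod]

theorem card_ker_comp {A B C : Type*} [AddGroup A] [AddGroup B] [AddGroup C] (g : B →+ C)
    (f : A →+ B) :
    Nat.card (g.comp f).ker = Nat.card f.ker * Nat.card (g.ker ⊓ f.range : AddSubgroup B) := by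
  have h := addMonoidHom_ncard_preimage f (s := (g.ker ⊓ f.range : AddSubgroup B))
    fun _ hx => hx.2
  rw [← Nat.card_coe_set_eq, ← Nat.card_coe_set_eq] at h
  rw [← SetLike.coe_sort_coe (g.ker ⊓ f.range), ← h]
  congr!
  ext
  simp [AddMonoidHom.mem_ker]

theorem two_mul_ncard_mem_and_eq {A : Type*} [AddGroup A] {W : AddSubgroup A} {φ : A →+ ZMod 2}
    (hφ : ∃ x ∈ W, φ x ≠ 0) (c : ZMod 2) : 2 * {x | x ∈ W ∧ φ x = c}.ncard = Nat.card W := by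
  obtain ⟨y, hyW, hy⟩ := hφ
  let ψ : W →+ ZMod 2 := φ.comp W.subtype
  have hsurj : Function.Surjective ψ := fun c => by
    obtain rfl | hc := eq_or_ne c 0
    · exact ⟨0, map_zero ψ⟩
    · exact ⟨⟨y, hyW⟩, by rw [Fin.eq_one_of_ne_zero _ hc]; exact Fin.eq_one_of_ne_zero _ hy⟩
  have hfiber : {x | x ∈ W ∧ φ x = c} = Subtype.val '' (ψ ⁻¹' {c}) := by
    ext x
    simp [ψ, and_comm]
  have hc := addMonoidHom_ncard_preimage ψ (s := {c}) fun c _ => hsurj c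
  have huniv := addMonoidHom_ncard_preimage ψ (s := Set.univ) fun c _ => hsurj c
  rw [Set.ncard_singleton, mul_one] at hc
  rw [Set.preimage_univ, Set.ncard_univ, Set.ncard_univ, Nat.card_zmod, mul_comm] at huniv
  rw [hfiber, Set.ncard_image_of_injective _ Subtype.val_injective, hc, huniv]

end Counting

section TraceCriterion

variable {K L : Type*} [Field K] [Field L] [Algebra K L]

/- The maps `u ↦ c * σ u - u` and `ζ ↦ σ⁻¹ (c * ζ) - ζ` are adjoint for the trace form; for `c = 1`
and `σ` a generator of the Galois group this is the additive form of Hilbert's Theorem 90. -/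
theorem exists_mul_apply_sub_eq_iff [FiniteDimensional K L] [Algebra.IsSeparable K L]
    (σ : L ≃ₐ[K] L) (c e : L) :
    (∃ u, c * σ u - u = e) ↔ ∀ ζ, σ ζ = c * ζ → Algebra.trace K L (ζ * e) = 0 := by
  constructor
  · rintro ⟨u, rfl⟩ ζ hζ
    have h : ζ * (c * σ u - u) = σ (ζ * u) - ζ * u := by rw [map_mul, hζ]; ring
    rw [h, map_sub, Algebra.trace_eq_of_algEquiv, sub_self]
  · intro h
    let T : L →ₗ[K] L := LinearMap.mulLeft K c ∘ₗ σ.toLinearMap - LinearMap.id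
    by_contra! hT
    obtain ⟨φ, hφe, hφT⟩ := Submodule.exists_dual_map_eq_bot_of_notMem
      (p := LinearMap.range T) (x := e) (by rintro ⟨u, hu⟩; exact hT u hu) inferInstance
    have nondeg := traceForm_nondegenerate K L
    obtain ⟨ζ, rfl⟩ := ((Algebra.traceForm K L).toDual nondeg).surjective φ
    have hζT (u : L) : Algebra.trace K L (ζ * (c * σ u - u)) = 0 :=
      (Submodule.mem_bot K).1 (hφT ▸ Submodule.mem_map_of_mem ⟨u, rfl⟩)
    refine hφe (h ζ (sub_eq_zero.1 (nondeg.1 _ fun x => ?_)))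
    obtain ⟨u, rfl⟩ := σ.surjective x
    have hadj : (σ ζ - c * ζ) * σ u = σ (ζ * u) - ζ * u - ζ * (c * σ u - u) := by
      rw [map_mul]; ring
    rw [Algebra.traceForm_apply, hadj, map_sub, map_sub, Algebra.trace_eq_of_algEquiv, hζT]
    simp

end TraceCriterion

section CharTwo

theorem charP_two_of_algebra (F : Type*) [Field F] [Algebra (ZMod 2) F] : CharP F 2 :=
  charP_of_injective_algebraMap' (ZMod 2) 2

attribute [local instance] charP_two_of_algebra

variable {F : Type*} [Field F] [Algebra (ZMod 2) F]

local notation "Tr" => Algebra.trace (ZMod 2) F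

/-- The linearised binomial `x ↦ c * x ^ (2 ^ k) + x`, as an additive map; composites of these give
the equation of the linear kernel. -/
def linBinomial (c : F) (k : ℕ) : F →+ F :=
  (AddMonoidHom.mulLeft c).comp (iterateFrobenius F 2 k).toAddMonoidHom + AddMonoidHom.id F

theorem linBinomial_apply (c : F) (k : ℕ) (x : F) : linBinomial c k x = c * x ^ 2 ^ k + x := rfl

theorem linBinomial_one_one_apply (x : F) : linBinomial 1 1 x = x ^ 2 + x := by
  simp [linBinomial_apply]

theorem linBinomial_two_eq_zero_iff {c x : F} :
    linBinomial c 2 x = 0 ↔ x = 0 ∨ c * x ^ 3 = 1 := by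
  have h : linBinomial c 2 x = x * (c * x ^ 3 + 1) := by rw [linBinomial_apply]; ring
  rw [h, mul_eq_zero, CharTwo.add_eq_zero]

theorem coe_ker_linBinomial_one {c : F} (hc : c ≠ 0) :
    ((linBinomial c 1).ker : Set F) = {0, c⁻¹} := by
  ext x
  have h : linBinomial c 1 x = x * (c * x + 1) := by rw [linBinomial_apply]; ring
  simp [AddMonoidHom.mem_ker, h, CharTwo.add_eq_zero, ← mul_eq_one_iff_eq_inv₀ hc, mul_comm c]

theorem card_ker_linBinomial_one {c : F} (hc : c ≠ 0) : Nat.card (linBinomial c 1).ker = 2 := by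
  rw [← SetLike.coe_sort_coe, coe_ker_linBinomial_one hc, Nat.card_coe_set_eq,
    Set.ncard_pair (inv_ne_zero hc).symm]

theorem linBinomial_two_mul {c e : F} (he : c * e ^ 3 = 1) (x : F) :
    linBinomial c 2 (e * x) = e * linBinomial 1 2 x := by
  rw [linBinomial_apply, linBinomial_apply]
  linear_combination e * x ^ 4 * he

theorem card_ker_linBinomial_two_of_mul_pow_three_eq_one {c e : F} (he : c * e ^ 3 = 1) :
    Nat.card (linBinomial c 2).ker = Nat.card (linBinomial (1 : F) 2).ker := by
  have he0 : e ≠ 0 := by rintro rfl; simp at he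
  refine (Nat.card_congr ((Equiv.mulLeft₀ e he0).subtypeEquiv fun x => ?_)).symm
  simp [AddMonoidHom.mem_ker, linBinomial_two_mul he, he0]

theorem ker_linBinomial_two_eq_bot {c : F} (hc : ∀ e, c * e ^ 3 ≠ 1) :
    (linBinomial c 2).ker = ⊥ := by
  ext x
  simp [AddMonoidHom.mem_ker, linBinomial_two_eq_zero_iff, hc]

/-- `e` is orthogonal, for the trace form, to the solutions of `ζ ^ 4 = ζ`; these form the subfield
with four elements when the degree of `F` is even. -/
def IsOrthogonalToF4 (e : F) : Prop := ∀ ζ ∈ (linBinomial (1 : F) 2).ker, Tr (e * ζ) = 0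

theorem isOrthogonalToF4_iff {c e : F} (he : c * e ^ 3 = 1) :
    IsOrthogonalToF4 e ↔ ∀ u ∈ (linBinomial c 2).ker, Tr u = 0 := by
  have he0 : e ≠ 0 := by rintro rfl; simp at he
  rw [(Equiv.mulLeft₀ e he0).surjective.forall]
  simp [IsOrthogonalToF4, AddMonoidHom.mem_ker, linBinomial_two_mul he, he0]

theorem ncard_trace_pow_seven_mul_eq_one {ζ : F} (hζ : ζ ^ 3 = 1) :
    {g : F | Tr (g ^ 7 * ζ) = 1}.ncard = {x : F | Tr (x ^ 7) = 1}.ncard := by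
  have hζ0 : ζ ≠ 0 := by rintro rfl; simp at hζ
  have hpow (g : F) : (g * ζ) ^ 7 = g ^ 7 * ζ := by
    linear_combination g ^ 7 * ζ * (ζ ^ 3 + 1) * hζ
  have hpre : {g : F | Tr (g ^ 7 * ζ) = 1} = (· * ζ) ⁻¹' {x | Tr (x ^ 7) = 1} := by
    ext g
    simp [hpow]
  rw [hpre, Set.ncard_preimage_of_injective_subset_range (mul_left_injective₀ hζ0)
    fun x _ => (mul_right_surjective₀ hζ0) x]

variable [Finite F]

theorem trace_pow_two_pow (k : ℕ) (x : F) : Tr (x ^ 2 ^ k) = Tr x := by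
  induction k with
  | zero => simp
  | succ k ih =>
    rw [pow_succ, pow_mul, ← ih]
    simpa using Algebra.trace_eq_of_algEquiv
      (FiniteField.frobeniusAlgEquivOfAlgebraic (ZMod 2) F) (x ^ 2 ^ k)

theorem two_mul_ncard_trace_eq_one : 2 * {x : F | Tr x = 1}.ncard = Nat.card F := by
  obtain ⟨x, hx⟩ := Algebra.trace_surjective (ZMod 2) F 1
  have hhalf := two_mul_ncard_mem_and_eq (W := ⊤) (φ := (Tr).toAddMonoidHom)
    ⟨x, trivial, by simp [hx]⟩ 1
  simpa using hhalf

theorem mem_range_linBinomial_iff {c e : F} {k : ℕ} :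
    e ∈ (linBinomial c k).range ↔ ∀ ζ, ζ ^ 2 ^ k = c * ζ → Tr (ζ * e) = 0 := by
  have h := exists_mul_apply_sub_eq_iff
    (FiniteField.frobeniusAlgEquivOfAlgebraic (ZMod 2) F ^ k) c e
  rw [AddMonoidHom.mem_range]
  simpa only [linBinomial_apply, AlgEquiv.coe_pow,
    FiniteField.coe_frobeniusAlgEquivOfAlgebraic_iterate, ZMod.card, CharTwo.sub_eq_add] using h

theorem mem_range_linBinomial_one_one_iff {e : F} :
    e ∈ (linBinomial (1 : F) 1).range ↔ Tr e = 0 := by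
  rw [mem_range_linBinomial_iff]
  refine ⟨fun h => by simpa using h 1, fun h ζ hζ => ?_⟩
  obtain rfl | rfl : ζ = 0 ∨ ζ = 1 := by
    rw [← sub_eq_zero (b := 1), ← mul_eq_zero]
    linear_combination hζ
  · simp
  · simpa using h

/- The equation dual to `c * u ^ 4 + u = c⁻¹` is `ζ ^ 4 = c * ζ`, and `u ↦ u⁻¹` matches its
solutions with the kernel of `linBinomial c 2`. -/
theorem inv_mem_range_linBinomial_two_iff {c : F} (hc : c ≠ 0) :
    c⁻¹ ∈ (linBinomial c 2).range ↔ ∀ u ∈ (linBinomial c 2).ker, Tr u = 0 := by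
  rw [mem_range_linBinomial_iff, inv_surjective.forall]
  refine forall_congr' fun u => ?_
  obtain rfl | hu := eq_or_ne u 0
  · simp
  have hker : u⁻¹ ^ 2 ^ 2 = c * u⁻¹ ↔ u ∈ (linBinomial c 2).ker := by
    simp only [AddMonoidHom.mem_ker, linBinomial_two_eq_zero_iff, hu, false_or]
    rw [inv_pow, inv_eq_iff_eq_inv, ← sub_eq_zero]
    field_simp
    grind
  rw [hker]
  refine forall_congr' fun hu' => ?_
  have hcu : c * u ^ 3 = 1 := (linBinomial_two_eq_zero_iff.1 hu').resolve_left hu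
  have hsq : u⁻¹ * c⁻¹ = u ^ 2 ^ 1 := by
    field_simp
    linear_combination -hcu
  rw [hsq, trace_pow_two_pow]

theorem trace_eq_zero_of_linBinomial_eq_inv {c u : F} (hc : c ≠ 0)
    (hu : linBinomial c 2 u = c⁻¹) : Tr u = 0 := by
  rw [← trace_pow_two_pow 1, ← mem_range_linBinomial_one_one_iff]
  refine ⟨c * u ^ 3, ?_⟩
  have hcu : c * (c * u ^ 4 + u) = 1 := by
    rw [← mul_inv_cancel₀ hc, ← hu, linBinomial_apply]
    norm_num
  rw [linBinomial_one_one_apply]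
  linear_combination u ^ 2 * hcu

theorem inv_mem_range_linBinomial_two_comp_iff {c : F} (hc : c ≠ 0) :
    c⁻¹ ∈ ((linBinomial c 2).comp (linBinomial 1 1)).range ↔
      ∀ u ∈ (linBinomial c 2).ker, Tr u = 0 := by
  rw [← inv_mem_range_linBinomial_two_iff hc]
  constructor
  · rintro ⟨y, hy⟩
    exact ⟨_, hy⟩
  · rintro ⟨u, hu⟩
    obtain ⟨y, rfl⟩ :=
      mem_range_linBinomial_one_one_iff.2 (trace_eq_zero_of_linBinomial_eq_inv hc hu)
    exact ⟨y, hu⟩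

/-- The composite of linearised binomials whose kernel, for `c = a ^ 7`, is the linear kernel of the
derivative of `tr (x ^ 7)` in direction `a`, up to multiplication by `a`. -/
def kernelMap (c : F) : F →+ F :=
  (linBinomial c 1).comp ((linBinomial c 2).comp (linBinomial 1 1))

theorem card_ker_kernelMap (c : F) :
    Nat.card (kernelMap c).ker =
      2 * {u | u ∈ (linBinomial c 2).ker ∧ Tr u = 0}.ncard *
        Nat.card ((linBinomial c 1).ker ⊓ ((linBinomial c 2).comp (linBinomial 1 1)).range :
          AddSubgroup F) := by
  have hinf : (((linBinomial c 2).ker ⊓ (linBinomial 1 1).range : AddSubgroup F) : Set F) =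
      {u | u ∈ (linBinomial c 2).ker ∧ Tr u = 0} := by
    ext u
    exact and_congr_right fun _ => mem_range_linBinomial_one_one_iff
  rw [kernelMap, card_ker_comp, card_ker_comp, card_ker_linBinomial_one one_ne_zero, ← hinf]
  rfl

theorem card_ker_kernelMap_of_forall_trace_eq_zero {c : F} (hc : c ≠ 0)
    (h : ∀ u ∈ (linBinomial c 2).ker, Tr u = 0) :
    Nat.card (kernelMap c).ker = 4 * Nat.card (linBinomial c 2).ker := by
  have htr : {u | u ∈ (linBinomial c 2).ker ∧ Tr u = 0} = (linBinomial c 2).ker := by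
    ext u
    exact and_iff_left_of_imp (h u)
  have hle : (linBinomial c 1).ker ≤ ((linBinomial c 2).comp (linBinomial 1 1)).range := by
    rw [← SetLike.coe_subset_coe, coe_ker_linBinomial_one hc, Set.insert_subset_iff,
      Set.singleton_subset_iff]
    exact ⟨zero_mem _, (inv_mem_range_linBinomial_two_comp_iff hc).2 h⟩
  rw [card_ker_kernelMap, htr, inf_eq_left.2 hle, card_ker_linBinomial_one hc,
    ← Nat.card_coe_set_eq, SetLike.coe_sort_coe]
  ring

theorem card_ker_kernelMap_of_not_forall_trace_eq_zero {c : F} (hc : c ≠ 0)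
    (h : ¬ ∀ u ∈ (linBinomial c 2).ker, Tr u = 0) :
    Nat.card (kernelMap c).ker = Nat.card (linBinomial c 2).ker := by
  have hhalf := two_mul_ncard_mem_and_eq (W := (linBinomial c 2).ker)
    (φ := (Tr).toAddMonoidHom) (by simpa using h) 0
  have hbot :
      (linBinomial c 1).ker ⊓ ((linBinomial c 2).comp (linBinomial 1 1)).range = ⊥ := by
    rw [← inv_mem_range_linBinomial_two_comp_iff hc] at h
    refine (AddSubgroup.eq_bot_iff_forall _).2 fun x hx => ?_
    have hx' : x ∈ ({0, c⁻¹} : Set F) := coe_ker_linBinomial_one hc ▸ hx.1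
    exact hx'.resolve_right fun hxc => h (hxc ▸ hx.2)
  rw [card_ker_kernelMap, hbot, AddSubgroup.card_bot, mul_one, ← hhalf]
  rfl

theorem card_ker_linBinomial_one_two (htr : Tr 1 = 0) :
    Nat.card (linBinomial (1 : F) 2).ker = 4 := by
  have hcomp : linBinomial (1 : F) 2 = (linBinomial 1 1).comp (linBinomial 1 1) := by
    ext x
    simp only [linBinomial_apply, AddMonoidHom.comp_apply]
    grind
  have hle : (linBinomial (1 : F) 1).ker ≤ (linBinomial 1 1).range := by
    rw [← SetLike.coe_subset_coe, coe_ker_linBinomial_one one_ne_zero, inv_one,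
      Set.insert_subset_iff, Set.singleton_subset_iff]
    exact ⟨zero_mem _, mem_range_linBinomial_one_one_iff.2 htr⟩
  rw [hcomp, card_ker_comp, inf_eq_left.2 hle, card_ker_linBinomial_one one_ne_zero]

theorem card_ker_kernelMap_of_not_cube {c : F} (hc : c ≠ 0) (hcube : ∀ e, c * e ^ 3 ≠ 1) :
    Nat.card (kernelMap c).ker = 4 := by
  have hbot := ker_linBinomial_two_eq_bot hcube
  rw [card_ker_kernelMap_of_forall_trace_eq_zero hc (by simp [hbot]), hbot, AddSubgroup.card_bot]

theorem card_ker_linBinomial_two (htr : Tr 1 = 0) {c e : F} (he : c * e ^ 3 = 1) :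
    Nat.card (linBinomial c 2).ker = 4 := by
  rw [card_ker_linBinomial_two_of_mul_pow_three_eq_one he, card_ker_linBinomial_one_two htr]

theorem card_ker_kernelMap_of_isOrthogonalToF4 (htr : Tr 1 = 0) {c e : F} (he : c * e ^ 3 = 1)
    (h : IsOrthogonalToF4 e) : Nat.card (kernelMap c).ker = 16 := by
  rw [card_ker_kernelMap_of_forall_trace_eq_zero (left_ne_zero_of_mul_eq_one he)
    ((isOrthogonalToF4_iff he).1 h), card_ker_linBinomial_two htr he]

theorem card_ker_kernelMap_of_not_isOrthogonalToF4 (htr : Tr 1 = 0) {c e : F}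
    (he : c * e ^ 3 = 1) (h : ¬ IsOrthogonalToF4 e) : Nat.card (kernelMap c).ker = 4 := by
  rw [card_ker_kernelMap_of_not_forall_trace_eq_zero (left_ne_zero_of_mul_eq_one he)
    (mt (isOrthogonalToF4_iff he).2 h), card_ker_linBinomial_two htr he]

theorem card_ker_kernelMap_eq_four_or_sixteen (htr : Tr 1 = 0) {c : F} (hc : c ≠ 0) :
    Nat.card (kernelMap c).ker = 4 ∨ Nat.card (kernelMap c).ker = 16 := by
  by_cases! hcube : ∃ e, c * e ^ 3 = 1
  · obtain ⟨e, he⟩ := hcube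
    exact (em (IsOrthogonalToF4 e)).symm.imp
      (card_ker_kernelMap_of_not_isOrthogonalToF4 htr he)
      (card_ker_kernelMap_of_isOrthogonalToF4 htr he)
  · exact Or.inl (card_ker_kernelMap_of_not_cube hc hcube)

theorem card_ker_kernelMap_eq_sixteen_iff (htr : Tr 1 = 0) {c e : F} (he : c * e ^ 3 = 1) :
    Nat.card (kernelMap c).ker = 16 ↔ IsOrthogonalToF4 e := by
  refine ⟨fun h => ?_, card_ker_kernelMap_of_isOrthogonalToF4 htr he⟩
  by_contra hnot
  rw [card_ker_kernelMap_of_not_isOrthogonalToF4 htr he hnot] at h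
  omega

theorem exists_cube_of_card_ker_kernelMap_eq_sixteen {c : F} (hc : c ≠ 0)
    (h : Nat.card (kernelMap c).ker = 16) : ∃ e, c * e ^ 3 = 1 := by
  by_contra! hcube
  rw [card_ker_kernelMap_of_not_cube hc hcube] at h
  omega

theorem ncard_pow_three_eq_one (htr : Tr 1 = 0) : {ζ : F | ζ ^ 3 = 1}.ncard = 3 := by
  have hker : ((linBinomial (1 : F) 2).ker : Set F) = insert 0 {ζ | ζ ^ 3 = 1} := by
    ext ζ
    simp [AddMonoidHom.mem_ker, linBinomial_two_eq_zero_iff]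
  have hcard := card_ker_linBinomial_one_two htr
  rw [← SetLike.coe_sort_coe, hker, Nat.card_coe_set_eq, Set.ncard_insert_of_notMem (by simp)]
    at hcard
  omega

theorem card_ker_kernelMap_zpow_eq_sixteen_iff (htr : Tr 1 = 0) (g : Fˣ) :
    Nat.card (kernelMap (((g ^ (-3 : ℤ) : Fˣ) : F) ^ 7)).ker = 16 ↔
      IsOrthogonalToF4 ((g : F) ^ 7) := by
  refine card_ker_kernelMap_eq_sixteen_iff htr ?_
  have h : (g ^ (-3 : ℤ)) ^ 7 * (g ^ 7) ^ 3 = 1 := by group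
  simpa only [Units.val_mul, Units.val_pow_eq_pow_val, Units.val_one] using congrArg Units.val h

theorem exists_zpow_eq_of_card_ker_kernelMap_eq_sixteen {a : Fˣ}
    (h : Nat.card (kernelMap ((a : F) ^ 7)).ker = 16) : ∃ g : Fˣ, g ^ (-3 : ℤ) = a := by
  obtain ⟨e, he⟩ := exists_cube_of_card_ker_kernelMap_eq_sixteen (pow_ne_zero 7 a.ne_zero) h
  have he0 : e ≠ 0 := by rintro rfl; simp at he
  refine ⟨Units.mk0 e he0 * a ^ 2, ?_⟩
  have hunit : a ^ 7 * Units.mk0 e he0 ^ 3 = 1 := Units.ext he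
  rw [zpow_neg, inv_eq_iff_mul_eq_one, zpow_ofNat, ← hunit, mul_pow, ← pow_mul]
  rw [mul_assoc, ← pow_succ, mul_comm]

theorem card_ker_zpowGroupHom_neg_three (htr : Tr 1 = 0) :
    Nat.card (zpowGroupHom (-3) : Fˣ →* Fˣ).ker = 3 := by
  have himage : {ζ : F | ζ ^ 3 = 1} =
      Units.val '' ((zpowGroupHom (-3) : Fˣ →* Fˣ).ker : Set Fˣ) := by
    ext ζ
    constructor
    · intro hζ
      lift ζ to Fˣ using .of_pow_eq_one hζ three_ne_zero
      refine ⟨ζ, ?_, rfl⟩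
      simpa [MonoidHom.mem_ker, Units.ext_iff, zpow_neg] using hζ
    · rintro ⟨ζ, hζ, rfl⟩
      simpa [MonoidHom.mem_ker, Units.ext_iff, zpow_neg] using hζ
  rw [← ncard_pow_three_eq_one htr, himage, Set.ncard_image_of_injective _ Units.val_injective,
    ← Nat.card_coe_set_eq, SetLike.coe_sort_coe]

theorem three_mul_ncard_card_ker_kernelMap_eq_sixteen (htr : Tr 1 = 0) :
    3 * {a : F | a ≠ 0 ∧ Nat.card (kernelMap (a ^ 7)).ker = 16}.ncard + 1 =
      {g : F | IsOrthogonalToF4 (g ^ 7)}.ncard := by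
  let φ : Fˣ →* Fˣ := zpowGroupHom (-3)
  let s : Set Fˣ := {a | Nat.card (kernelMap ((a : F) ^ 7)).ker = 16}
  have hφ (g : Fˣ) : φ g ∈ s ↔ IsOrthogonalToF4 ((g : F) ^ 7) :=
    card_ker_kernelMap_zpow_eq_sixteen_iff htr g
  have hs : s ⊆ Set.range φ := fun a ha => exists_zpow_eq_of_card_ker_kernelMap_eq_sixteen ha
  have h16 : {a : F | a ≠ 0 ∧ Nat.card (kernelMap (a ^ 7)).ker = 16} = Units.val '' s := by
    ext a
    constructor
    · rintro ⟨ha, h⟩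
      exact ⟨Units.mk0 a ha, h, rfl⟩
    · rintro ⟨a, h, rfl⟩
      exact ⟨a.ne_zero, h⟩
  have horth : {g : F | IsOrthogonalToF4 (g ^ 7)} = insert 0 (Units.val '' (φ ⁻¹' s)) := by
    ext g
    obtain rfl | hg := eq_or_ne g 0
    · simp [IsOrthogonalToF4]
    · lift g to Fˣ using hg.isUnit
      simp [← hφ, Units.val_inj]
  rw [h16, horth, Set.ncard_insert_of_notMem (by simp),
    Set.ncard_image_of_injective _ Units.val_injective,
    Set.ncard_image_of_injective _ Units.val_injective, monoidHom_ncard_preimage φ hs,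
    card_ker_zpowGroupHom_neg_three htr]

theorem ncard_trace_mul_eq_one_of_not_isOrthogonalToF4 (htr : Tr 1 = 0) {e : F}
    (he : ¬ IsOrthogonalToF4 e) : {ζ : F | ζ ^ 3 = 1 ∧ Tr (e * ζ) = 1}.ncard = 2 := by
  have hhalf := two_mul_ncard_mem_and_eq (W := (linBinomial (1 : F) 2).ker)
    (φ := (Tr).toAddMonoidHom.comp (AddMonoidHom.mulLeft e)) 
    (by simpa [IsOrthogonalToF4] using he) 1
  have hset : {ζ : F | ζ ^ 3 = 1 ∧ Tr (e * ζ) = 1} =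
      {ζ | ζ ∈ (linBinomial (1 : F) 2).ker ∧
        (Tr).toAddMonoidHom.comp (AddMonoidHom.mulLeft e) ζ = 1} := by
    ext ζ
    obtain rfl | hζ := eq_or_ne ζ 0
    · simp
    · simp [AddMonoidHom.mem_ker, linBinomial_two_eq_zero_iff, hζ]
  rw [card_ker_linBinomial_one_two htr, ← hset] at hhalf
  omega

/- Both sides count the pairs `(g, ζ)` with `ζ ^ 3 = 1` and `Tr (g ^ 7 * ζ) = 1`. -/
theorem two_mul_ncard_not_isOrthogonalToF4 (htr : Tr 1 = 0) :
    2 * {g : F | ¬ IsOrthogonalToF4 (g ^ 7)}.ncard = 3 * {x : F | Tr (x ^ 7) = 1}.ncard := by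
  classical
  have := Fintype.ofFinite F
  rw [← ncard_pow_three_eq_one htr, Set.ncard_eq_toFinset_card', Set.ncard_eq_toFinset_card',
    mul_comm]
  refine Finset.card_mul_eq_card_mul (fun g ζ => Tr (g ^ 7 * ζ) = 1) (fun g hg => ?_)
    fun ζ hζ => ?_
  · have htwo := ncard_trace_mul_eq_one_of_not_isOrthogonalToF4 htr (by simpa using hg)
    rw [Set.ncard_eq_toFinset_card'] at htwo
    convert htwo
    ext ζ
    simp [Finset.bipartiteAbove]
  · have hζ3 : ζ ^ 3 = 1 := by simpa using hζ
    rw [← ncard_trace_pow_seven_mul_eq_one hζ3, Set.ncard_eq_toFinset_card']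
    congr 1
    ext g
    have hnot : Tr (g ^ 7 * ζ) = 1 → ¬ IsOrthogonalToF4 (g ^ 7) := fun h horth => by
      simp [horth ζ (by simp [AddMonoidHom.mem_ker, linBinomial_two_eq_zero_iff, hζ3])] at h
    simpa [Finset.bipartiteBelow] using hnot

theorem six_mul_ncard_card_ker_kernelMap_eq_sixteen (htr : Tr 1 = 0) :
    6 * {a : F | a ≠ 0 ∧ Nat.card (kernelMap (a ^ 7)).ker = 16}.ncard + 2 +
      3 * {x : F | Tr (x ^ 7) = 1}.ncard = 2 * Nat.card F := by
  have h16 := three_mul_ncard_card_ker_kernelMap_eq_sixteen htr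
  have hcompl := Set.ncard_add_ncard_compl {g : F | IsOrthogonalToF4 (g ^ 7)}
  have hnot := two_mul_ncard_not_isOrthogonalToF4 htr
  rw [Set.compl_ofPred] at hcompl
  omega

theorem ncard_card_ker_kernelMap_eq_four_add (htr : Tr 1 = 0) :
    {a : F | a ≠ 0 ∧ Nat.card (kernelMap (a ^ 7)).ker = 4}.ncard +
      {a : F | a ≠ 0 ∧ Nat.card (kernelMap (a ^ 7)).ker = 16}.ncard + 1 = Nat.card F := by
  have hunion : {a : F | a ≠ 0 ∧ Nat.card (kernelMap (a ^ 7)).ker = 4} ∪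
      {a | a ≠ 0 ∧ Nat.card (kernelMap (a ^ 7)).ker = 16} = {0}ᶜ := by
    ext a
    simp only [Set.mem_union, Set.mem_ofPred_eq, Set.mem_compl_iff, Set.mem_singleton_iff,
      ← and_or_left, and_iff_left_iff_imp]
    exact fun ha => card_ker_kernelMap_eq_four_or_sixteen htr (pow_ne_zero 7 ha)
  have hdisj : Disjoint {a : F | a ≠ 0 ∧ Nat.card (kernelMap (a ^ 7)).ker = 4}
      {a | a ≠ 0 ∧ Nat.card (kernelMap (a ^ 7)).ker = 16} :=
    Set.disjoint_left.2 fun a h4 h16 => by have := h4.2.symm.trans h16.2; omega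
  have hcompl := Set.ncard_add_ncard_compl ({0} : Set F)
  rw [Set.ncard_singleton] at hcompl
  rw [← Set.ncard_union_eq hdisj, hunion, add_comm, hcompl]

/- Since `Tr z = Tr (z ^ 2)`, the `𝔽₂`-linear part of the second derivative can be collected
into the trace of a multiple of `x ^ 4`. -/
theorem second_derivative_trace_pow_seven (a y x : F) :
    Tr (x ^ 7) + Tr ((x + a) ^ 7) + (Tr ((x + a * y) ^ 7) + Tr ((x + a * y + a) ^ 7)) =
      Tr (a ^ 7 + (a * y) ^ 7 + (a + a * y) ^ 7) + Tr (a ^ 3 * kernelMap (a ^ 7) y * x ^ 4) := by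
  have hexp : x ^ 7 + (x + a) ^ 7 + ((x + a * y) ^ 7 + (x + a * y + a) ^ 7) =
      a ^ 7 + (a * y) ^ 7 + (a + a * y) ^ 7 +
        (a ^ 6 * (y ^ 4 + y ^ 2) * x + a ^ 5 * (y ^ 4 + y) * x ^ 2 +
          a ^ 3 * (y ^ 2 + y) * x ^ 4) := by
    grind
  have hker : a ^ 3 * kernelMap (a ^ 7) y * x ^ 4 =
      (a ^ 6 * (y ^ 4 + y ^ 2) * x) ^ 2 ^ 2 + (a ^ 5 * (y ^ 4 + y) * x ^ 2) ^ 2 ^ 1 +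
        a ^ 3 * (y ^ 2 + y) * x ^ 4 := by
    simp only [kernelMap, AddMonoidHom.comp_apply, linBinomial_apply]
    grind
  rw [← map_add, ← map_add, ← map_add, hexp, hker]
  simp only [map_add, trace_pow_two_pow]

end CharTwo

section PowerMap

theorem pow_injective_of_coprime {G : Type*} [GroupWithZero G] {k : ℕ} (hk : k ≠ 0)
    (h : (Nat.card Gˣ).Coprime k) : Function.Injective fun x : G => x ^ k := by
  intro x y hxy
  change x ^ k = y ^ k at hxy
  obtain rfl | hy := eq_or_ne y 0
  · simpa [hk] using hxy
  have hx : x ≠ 0 := by rintro rfl; exact pow_ne_zero k hy (by simpa [hk] using hxy.symm)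
  lift x to Gˣ using hx.isUnit
  lift y to Gˣ using hy.isUnit
  exact congrArg Units.val ((powCoprime h).injective (Units.ext (by simpa using hxy)))

theorem coprime_two_pow_sub_one_seven {n : ℕ} (h : ¬ 3 ∣ n) : (2 ^ n - 1).Coprime 7 := by
  have hn : n.gcd 3 = 1 := (Nat.prime_three.coprime_iff_not_dvd.2 h).symm
  have hgcd := Nat.pow_sub_one_gcd_pow_sub_one 2 n 3
  simpa [hn] using hgcd

end PowerMap

section Fq

variable {n : ℕ}

theorem two_mul_wt_tr_pow_seven (hn : n ≠ 0) (h3 : ¬ 3 ∣ n) :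
    2 * wt (fun x : Fq n => tr (x ^ 7)) = 2 ^ n := by
  have hcard := GaloisField.card 2 n hn
  have hinj : Function.Injective fun x : Fq n => x ^ 7 := by
    refine pow_injective_of_coprime (by norm_num) ?_
    rw [Nat.card_units, hcard]
    exact coprime_two_pow_sub_one_seven h3
  have hpre : {x : Fq n | tr (x ^ 7) = 1} = (· ^ 7) ⁻¹' {x | tr x = 1} := rfl
  rw [wt, hpre, Set.ncard_preimage_of_injective_subset_range hinj
    fun x _ => Finite.surjective_of_injective hinj x, ← hcard]
  exact two_mul_ncard_trace_eq_one

theorem trace_one_of_even (hn : n ≠ 0) (hev : Even n) :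
    Algebra.trace (ZMod 2) (Fq n) 1 = 0 := by
  rw [← map_one (algebraMap (ZMod 2) (Fq n)), Algebra.trace_algebraMap, GaloisField.finrank 2 hn,
    nsmul_one, ZMod.natCast_eq_zero_iff_even.2 hev]

theorem mul_mem_linKer_der_iff {a : Fq n} (ha : a ≠ 0) {y : Fq n} :
    a * y ∈ linKer (der (fun x => tr (x ^ 7)) a) ↔ y ∈ (kernelMap (a ^ 7)).ker := by
  have hder (x : Fq n) :
      der (der (fun x => tr (x ^ 7)) a) (a * y) x =
        Algebra.trace (ZMod 2) (Fq n) (a ^ 7 + (a * y) ^ 7 + (a + a * y) ^ 7) +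
          Algebra.trace (ZMod 2) (Fq n) (a ^ 3 * kernelMap (a ^ 7) y * x ^ 4) :=
    second_derivative_trace_pow_seven a y x
  rw [AddMonoidHom.mem_ker]
  constructor
  · rintro ⟨c, hc⟩
    have htrace (x : Fq n) :
        Algebra.trace (ZMod 2) (Fq n) (a ^ 3 * kernelMap (a ^ 7) y * x ^ 4) = 0 := by
      have hx := (hc x).trans (hc 0).symm
      rw [hder, hder, add_right_inj] at hx
      simpa using hx
    have hzero : a ^ 3 * kernelMap (a ^ 7) y = 0 := by
      refine (traceForm_nondegenerate (ZMod 2) (Fq n)).1 _ fun z => ?_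
      obtain ⟨x, rfl⟩ := (bijective_iterateFrobenius (Fq n) 2 2).2 z
      exact htrace x
    exact (mul_eq_zero.1 hzero).resolve_left (pow_ne_zero 3 ha)
  · intro hy
    exact ⟨_, fun x => (hder x).trans (by rw [hy, mul_zero, zero_mul, map_zero, add_zero])⟩

theorem ncard_linKer_der {a : Fq n} (ha : a ≠ 0) :
    (linKer (der (fun x => tr (x ^ 7)) a)).ncard = Nat.card (kernelMap (a ^ 7)).ker := by
  rw [← Nat.card_coe_set_eq]
  exact (Nat.card_congr ((Equiv.mulLeft₀ a ha).subtypeEquiv fun y =>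
    (mul_mem_linKer_der_iff ha).symm)).symm

end Fq

theorem linKer_card_der_tr_x7_even_general (n : ℕ) (hn : 0 < n) (hev : Even n)
    (f : Fq n → ZMod 2) (hf : ∀ x, f x = tr (x ^ 7)) :
    (∀ a : Fq n, a ≠ 0 →
      (linKer (der f a)).ncard = 4 ∨ (linKer (der f a)).ncard = 16) ∧
    (¬ (3 ∣ n) →
      (({a : Fq n | a ≠ 0 ∧ (linKer (der f a)).ncard = 4}.ncard : ℝ)
          = (11 * (2:ℝ) ^ ((n:ℝ) - 2) - 2) / 3 ∧
        ({a : Fq n | a ≠ 0 ∧ (linKer (der f a)).ncard = 16}.ncard : ℝ)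
          = ((2:ℝ) ^ ((n:ℝ) - 2) - 1) / 3)) ∧
    (({a : Fq n | a ≠ 0 ∧ (linKer (der f a)).ncard = 4}.ncard : ℝ)
        = (2/3) * ((2:ℝ) ^ (n:ℝ) - 1)
          + (1/2) * (wt (fun x : Fq n => tr (x ^ 7)) : ℝ) ∧
      ({a : Fq n | a ≠ 0 ∧ (linKer (der f a)).ncard = 16}.ncard : ℝ)
        = (1/3) * ((2:ℝ) ^ (n:ℝ) - 1)
          - (1/2) * (wt (fun x : Fq n => tr (x ^ 7)) : ℝ)) := by
  obtain rfl : f = fun x => tr (x ^ 7) := funext hf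
  have htr := trace_one_of_even hn.ne' hev
  have hset (k : ℕ) : {a : Fq n | a ≠ 0 ∧ (linKer (der (fun x => tr (x ^ 7)) a)).ncard = k} =
      {a | a ≠ 0 ∧ Nat.card (kernelMap (a ^ 7)).ker = k} :=
    Set.ext fun a => and_congr_right fun ha => by rw [ncard_linKer_der ha]
  have hpow : (2 : ℝ) ^ ((n : ℝ) - 2) = 2 ^ n / 4 := by
    rw [Real.rpow_sub two_pos, Real.rpow_natCast]
    norm_num
  have hsum := ncard_card_ker_kernelMap_eq_four_add htr
  have h16 : 6 * {a : Fq n | a ≠ 0 ∧ Nat.card (kernelMap (a ^ 7)).ker = 16}.ncard + 2 +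
      3 * wt (fun x : Fq n => tr (x ^ 7)) = 2 * Nat.card (Fq n) :=
    six_mul_ncard_card_ker_kernelMap_eq_sixteen htr
  rw [GaloisField.card 2 n hn.ne'] at hsum h16
  have hsum' := congrArg (Nat.cast (R := ℝ)) hsum
  have h16' := congrArg (Nat.cast (R := ℝ)) h16
  push_cast at hsum' h16'
  rw [hset, hset, hpow, Real.rpow_natCast]
  refine ⟨fun a ha => ?_, fun h3 => ?_, by linarith, by linarith⟩
  · rw [ncard_linKer_der ha]
    exact card_ker_kernelMap_eq_four_or_sixteen htr (pow_ne_zero 7 ha)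
  · have hwt := congrArg (Nat.cast (R := ℝ)) (two_mul_wt_tr_pow_seven hn.ne' h3)
    push_cast at hwt
    constructor <;> linarith

/-- Distribution of linear-kernel sizes of derivatives of `tr(x^7)`, even `n`. -/
theorem linKer_card_der_tr_x7_even (n : ℕ) (hn : 0 < n) (hev : Even n)
    (f : Fq n → ZMod 2) (hf : ∀ x, f x = tr (x ^ 7)) :
    (∀ a : Fq n, a ≠ 0 →
      (linKer (der f a)).ncard = 4 ∨ (linKer (der f a)).ncard = 16) ∧
    (¬ (3 ∣ n) →
      (({a : Fq n | a ≠ 0 ∧ (linKer (der f a)).ncard = 4}.ncard : ℝ)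
          = (11 * (2:ℝ) ^ ((n:ℝ) - 2) - 2) / 3 ∧
        ({a : Fq n | a ≠ 0 ∧ (linKer (der f a)).ncard = 16}.ncard : ℝ)
          = ((2:ℝ) ^ ((n:ℝ) - 2) - 1) / 3)) ∧
    ((3 ∣ n) →
      (({a : Fq n | a ≠ 0 ∧ (linKer (der f a)).ncard = 4}.ncard : ℝ)
          = (2/3) * ((2:ℝ) ^ (n:ℝ) - 1)
            + (1/2) * (wt (fun x : Fq n => tr (x ^ 7)) : ℝ) ∧
        ({a : Fq n | a ≠ 0 ∧ (linKer (der f a)).ncard = 16}.ncard : ℝ)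
          = (1/3) * ((2:ℝ) ^ (n:ℝ) - 1)
            - (1/2) * (wt (fun x : Fq n => tr (x ^ 7)) : ℝ))) := by
  obtain ⟨hcard, hndvd, hwt⟩ := linKer_card_der_tr_x7_even_general n hn hev f hf
  exact ⟨hcard, hndvd, fun _ => hwt⟩
end
end

section
/- Let n be an odd positive integer and let f : F → 𝔽₂ be defined by f(x) = tr(x^7). For every a ∈ F with a ≠ 0, the linear kernel E_{D_a f} has cardinality 2 or 8. Moreover: if 3 does not divide n, then |{a ∈ F, a ≠ 0 : |E_{D_a f}| = 2}| = 2^{n−1} and |{a ∈ F, a ≠ 0 : |E_{D_a f}| = 8}| = 2^{n−1} − 1; if 3 divides n, then |{a ∈ F, a ≠ 0 : |E_{D_a f}| = 2}| = wt(tr(x^7)) and |{a ∈ F, a ≠ 0 : |E_{D_a f}| = 8}| = 2^n − 1 − wt(tr(x^7)). -/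
noncomputable section

/-!
Up to a constant, `D_b D_a tr(x ^ 7)` is `tr(x ^ 4 * P_a(b))` for an additive polynomial `P_a`, so
the linear kernel of `D_a tr(x ^ 7)` is the zero set of `P_a`. For odd `n` every `a ≠ 0` is
`(x ^ 3)⁻¹` for a unique `x`, and with `s = x ^ 7` and `℘ u = u ^ 2 + u` the polynomial factors:
`P_a(a * u)` is a nonzero multiple of `℘ (s ^ (-2) * ℘ (℘ (s ^ (-1) * ℘ u)))`. The operator `℘` is
two-to-one onto the elements of trace zero, and for odd `n` it permutes them. Peeling off the
factors, if `tr s = 1` only `℘ u = 0` survives (2 roots), and if `tr s = 0` every intermediate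
equation is solvable and there are 8 roots. So the kernel has size 2 exactly when `tr (x ^ 7) = 1`.
-/

section Fibers

theorem ncard_preimage_of_subset_range {G H : Type*} [AddGroup G] [AddGroup H] (φ : G →+ H)
    {S : Set H} (hS : S ⊆ Set.range φ) : (φ ⁻¹' S).ncard = Nat.card φ.ker * S.ncard := by
  let ψ := QuotientAddGroup.kerLift φ
  have hψ : S ⊆ Set.range ψ := fun y hy ↦ by
    obtain ⟨x, rfl⟩ := hS hy
    exact ⟨x, QuotientAddGroup.kerLift_mk φ x⟩
  calc (φ ⁻¹' S).ncard = Nat.card (φ.ker × (ψ ⁻¹' S)) :=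
        Nat.card_congr (QuotientAddGroup.preimageMkEquivAddSubgroupProdSet φ.ker (ψ ⁻¹' S))
    _ = Nat.card φ.ker * (ψ ⁻¹' S).ncard := Nat.card_prod _ _
    _ = Nat.card φ.ker * S.ncard := by
        rw [Set.ncard_preimage_of_injective_subset_range (QuotientAddGroup.kerLift_injective φ) hψ]

theorem card_mul_ncard_preimage_singleton {G H : Type*} [AddGroup G] [AddGroup H] {φ : G →+ H}
    (hφ : Function.Surjective φ) (c : H) : Nat.card H * (φ ⁻¹' {c}).ncard = Nat.card G := by
  have hfiber := ncard_preimage_of_subset_range φ (S := {c}) (by simp [hφ.range_eq])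
  have huniv := ncard_preimage_of_subset_range φ (S := Set.univ) (by simp [hφ.range_eq])
  rw [Set.preimage_univ, Set.ncard_univ, Set.ncard_univ] at huniv
  rw [hfiber, huniv, Set.ncard_singleton, mul_one, mul_comm]

end Fibers

theorem pow_left_bijective_of_coprime {K : Type*} [GroupWithZero K] [Finite K] {m : ℕ}
    (hm : m ≠ 0) (h : (Nat.card K - 1).Coprime m) : Function.Bijective fun x : K ↦ x ^ m := by
  refine Finite.injective_iff_bijective.1 fun x y (hxy : x ^ m = y ^ m) ↦ ?_
  rcases eq_or_ne y 0 with rfl | hy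
  · simpa [hm] using hxy
  have hx : x ≠ 0 := fun hx ↦ hy (by simpa [hx, hm] using hxy.symm)
  rw [← Nat.card_units] at h
  have : Units.mk0 x hx = Units.mk0 y hy := h.pow_left_bijective.1 (Units.ext (by simpa using hxy))
  simpa using congrArg Units.val this

section ArtinSchreier

variable (F : Type*) [Field F] [Fintype F]

/-- The Artin–Schreier operator `x ↦ x ^ q - x` of an algebra over the field `F` with `q`
elements, as an `F`-linear map. -/
def artinSchreier (R : Type*) [CommRing R] [Algebra F R] : R →ₗ[F] R :=
  (FiniteField.frobeniusAlgHom F R).toLinearMap - LinearMap.id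

theorem artinSchreier_apply {R : Type*} [CommRing R] [Algebra F R] (x : R) :
    artinSchreier F R x = x ^ Fintype.card F - x := rfl

variable {K : Type*} [Field K] [Finite K] [Algebra F K]

theorem artinSchreier_eq_zero_iff {x : K} :
    artinSchreier F K x = 0 ↔ x ∈ Set.range (algebraMap F K) := by
  rw [artinSchreier_apply, sub_eq_zero, IsGalois.mem_range_algebraMap_iff_fixed]
  refine ⟨fun hx σ ↦ ?_, fun hx ↦ hx (FiniteField.frobeniusAlgEquivOfAlgebraic F K)⟩
  obtain ⟨i, rfl⟩ := (FiniteField.bijective_frobeniusAlgEquivOfAlgebraic_pow F K).2 σ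
  rw [AlgEquiv.coe_pow]
  exact Function.IsFixedPt.iterate hx i

variable (K) in
theorem ker_artinSchreier : LinearMap.ker (artinSchreier F K) = (Algebra.linearMap F K).range :=
  SetLike.ext fun _ ↦ artinSchreier_eq_zero_iff F

theorem trace_artinSchreier (x : K) : Algebra.trace F K (artinSchreier F K x) = 0 := by
  rw [artinSchreier_apply, map_sub, sub_eq_zero]
  exact Algebra.trace_eq_of_algEquiv (FiniteField.frobeniusAlgEquivOfAlgebraic F K) x

variable (K) in
theorem finrank_ker_artinSchreier : Module.finrank F (LinearMap.ker (artinSchreier F K)) = 1 := by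
  rw [ker_artinSchreier,
    LinearMap.finrank_range_of_inj (FaithfulSMul.algebraMap_injective F K), Module.finrank_self]

-- The additive form of Hilbert 90 for finite fields: both sides are hyperplanes.
variable (K) in
theorem range_artinSchreier :
    (artinSchreier F K).range = LinearMap.ker (Algebra.trace F K) := by
  have hle : (artinSchreier F K).range ≤ LinearMap.ker (Algebra.trace F K) := by
    rintro _ ⟨x, rfl⟩
    exact trace_artinSchreier F x
  have hAS := (artinSchreier F K).finrank_range_add_finrank_ker
  have htr := (Algebra.trace F K).finrank_range_add_finrank_ker
  rw [finrank_ker_artinSchreier] at hAS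
  rw [LinearMap.range_eq_top.2 (Algebra.trace_surjective F K), finrank_top,
    Module.finrank_self] at htr
  exact Submodule.eq_of_le_of_finrank_eq hle (by omega)

theorem trace_eq_zero_iff_exists_artinSchreier_eq {v : K} :
    Algebra.trace F K v = 0 ↔ ∃ x, artinSchreier F K x = v :=
  (SetLike.ext_iff.1 (range_artinSchreier F K) v).symm

theorem artinSchreier_artinSchreier_inj (hd : (Module.finrank F K : F) ≠ 0) {x y : K} :
    artinSchreier F K (artinSchreier F K x) = artinSchreier F K (artinSchreier F K y) ↔
      artinSchreier F K x = artinSchreier F K y := by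
  refine ⟨fun h ↦ ?_, congrArg _⟩
  rw [← sub_eq_zero, ← map_sub, ← map_sub, artinSchreier_eq_zero_iff] at h
  obtain ⟨c, hc⟩ := h
  have htr : (Module.finrank F K : F) * c = 0 := by
    rw [← nsmul_eq_mul, ← Algebra.trace_algebraMap (S := K), hc, trace_artinSchreier]
  have hc0 : c = 0 := (mul_eq_zero_iff_left hd).1 htr
  rw [hc0, map_zero] at hc
  rw [← sub_eq_zero, ← map_sub, hc]

theorem exists_artinSchreier_artinSchreier_eq (hd : (Module.finrank F K : F) ≠ 0) {v : K}
    (hv : Algebra.trace F K v = 0) : ∃ x, artinSchreier F K (artinSchreier F K x) = v := by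
  obtain ⟨u, rfl⟩ := (trace_eq_zero_iff_exists_artinSchreier_eq F).1 hv
  let c : F := Algebra.trace F K u / Module.finrank F K
  have hu : Algebra.trace F K (u - algebraMap F K c) = 0 := by
    rw [map_sub, Algebra.trace_algebraMap, nsmul_eq_mul, mul_div_cancel₀ _ hd, sub_self]
  obtain ⟨x, hx⟩ := (trace_eq_zero_iff_exists_artinSchreier_eq F).1 hu
  exact ⟨x, by rw [hx, map_sub, (artinSchreier_eq_zero_iff F).2 ⟨c, rfl⟩, sub_zero]⟩

theorem ncard_preimage_artinSchreier {S : Set K} (hS : ∀ v ∈ S, Algebra.trace F K v = 0) :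
    (artinSchreier F K ⁻¹' S).ncard = Fintype.card F * S.ncard := by
  have hrange : S ⊆ Set.range (artinSchreier F K) := by
    rw [← LinearMap.coe_range, range_artinSchreier]
    exact hS
  have hker : Nat.card (LinearMap.ker (artinSchreier F K)) = Fintype.card F := by
    rw [Module.natCard_eq_pow_finrank (K := F), finrank_ker_artinSchreier, pow_one,
      Nat.card_eq_fintype_card]
  rw [← hker]
  exact ncard_preimage_of_subset_range (artinSchreier F K).toAddMonoidHom hrange

end ArtinSchreier

section CharTwo

variable {K : Type*} [Field K] [CharP K 2] [Algebra (ZMod 2) K]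

local notation "℘" => artinSchreier (ZMod 2) K

theorem artinSchreier_zmod_two_apply (x : K) : ℘ x = x ^ 2 + x := by
  rw [artinSchreier_apply, ZMod.card, CharTwo.sub_eq_add]

theorem artinSchreier_zmod_two_eq_zero_iff {x : K} : ℘ x = 0 ↔ x = 0 ∨ x = 1 := by
  rw [artinSchreier_zmod_two_apply, pow_two, ← mul_add_one, mul_eq_zero, CharTwo.add_eq_zero]

theorem artinSchreier_zmod_two_sq (x : K) : ℘ (x ^ 2) = ℘ x ^ 2 := by
  rw [artinSchreier_zmod_two_apply, artinSchreier_zmod_two_apply, CharTwo.add_sq]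

theorem artinSchreier_artinSchreier_mul_sq (x : K) : ℘ (℘ x) * x ^ 2 = ℘ (x ^ 3) := by
  simp only [artinSchreier_zmod_two_apply, CharTwo.add_sq]
  linear_combination x ^ 4 * CharTwo.two_eq_zero (R := K)

/-- The polynomial in `b` whose roots are the linear kernel of the derivative `D_a tr(x ^ 7)`:
`D_b D_a tr(x ^ 7)` is `tr(x ^ 4 * linKerPoly a b)` up to a constant. -/
def linKerPoly {R : Type*} [CommRing R] (a b : R) : R :=
  a ^ 8 * b ^ 16 + a ^ 16 * b ^ 8 + a ^ 2 * b ^ 8 + a ^ 8 * b ^ 2 + a * b ^ 2 + a ^ 2 * b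

theorem linKerPoly_inv_cube {x : K} (hx : x ≠ 0) (u : K) :
    linKerPoly (x ^ 3)⁻¹ ((x ^ 3)⁻¹ * u) =
      x ^ 12 * ℘ (℘ (℘ (℘ u / x ^ 7)) / (x ^ 7) ^ 2) := by
  simp only [artinSchreier_zmod_two_apply, linKerPoly]
  field_simp
  grind [CharTwo.two_eq_zero (R := K)]

theorem linKerPoly_inv_cube_eq_zero_iff {x : K} (hx : x ≠ 0) (u : K) :
    linKerPoly (x ^ 3)⁻¹ ((x ^ 3)⁻¹ * u) = 0 ↔
      ℘ (℘ (℘ u / x ^ 7)) = 0 ∨ ℘ (℘ (℘ u / x ^ 7)) = (x ^ 7) ^ 2 := by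
  have hx12 : x ^ 12 ≠ 0 := pow_ne_zero 12 hx
  have hx14 : (x ^ 7) ^ 2 ≠ 0 := pow_ne_zero 2 (pow_ne_zero 7 hx)
  rw [linKerPoly_inv_cube hx, mul_eq_zero, or_iff_right hx12, artinSchreier_zmod_two_eq_zero_iff,
    div_eq_zero_iff, or_iff_left hx14, div_eq_one_iff_eq hx14]

end CharTwo

section GaloisField

variable {n : ℕ}

local notation "℘" => artinSchreier (ZMod 2) (Fq _)

theorem tr_zero : tr (0 : Fq n) = 0 := map_zero _

theorem tr_add (x y : Fq n) : tr (x + y) = tr x + tr y := map_add _ x y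

theorem tr_artinSchreier (x : Fq n) : tr (℘ x) = 0 := trace_artinSchreier (ZMod 2) x

theorem tr_sq (x : Fq n) : tr (x ^ 2) = tr x := by
  rw [← CharTwo.add_eq_zero, ← tr_add, ← artinSchreier_zmod_two_apply, tr_artinSchreier]

theorem tr_pow_four (x : Fq n) : tr (x ^ 4) = tr x := by
  rw [show x ^ 4 = (x ^ 2) ^ 2 by ring, tr_sq, tr_sq]

theorem eq_zero_of_forall_tr_mul_eq_zero {y : Fq n} (h : ∀ x, tr (x * y) = 0) : y = 0 :=
  (traceForm_nondegenerate (ZMod 2) (Fq n)).2 y h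

theorem finrank_Fq_ne_zero_of_odd (hodd : Odd n) :
    (Module.finrank (ZMod 2) (Fq n) : ZMod 2) ≠ 0 := by
  rw [GaloisField.finrank 2 hodd.pos.ne', ZMod.natCast_eq_one_iff_odd.2 hodd]
  exact one_ne_zero

theorem der_der_tr_pow_seven (a b x : Fq n) :
    der (der (fun x ↦ tr (x ^ 7)) a) b x =
      tr (x ^ 4 * linKerPoly a b) + tr (a ^ 7 + b ^ 7 + (a + b) ^ 7) := by
  have hexpand : x ^ 7 + (x + a) ^ 7 + ((x + b) ^ 7 + (x + b + a) ^ 7) =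
      x * (a ^ 2 * b ^ 4 + a ^ 4 * b ^ 2) + x ^ 2 * (a * b ^ 4 + a ^ 4 * b)
        + x ^ 4 * (a * b ^ 2 + a ^ 2 * b) + (a ^ 7 + b ^ 7 + (a + b) ^ 7) := by
    grind [CharTwo.two_eq_zero (R := Fq n)]
  have hcollect : x ^ 4 * linKerPoly a b = (x * (a ^ 2 * b ^ 4 + a ^ 4 * b ^ 2)) ^ 4
      + (x ^ 2 * (a * b ^ 4 + a ^ 4 * b)) ^ 2 + x ^ 4 * (a * b ^ 2 + a ^ 2 * b) := by
    grind [linKerPoly, CharTwo.two_eq_zero (R := Fq n)]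
  simp only [der, ← tr_add]
  rw [hexpand, hcollect]
  simp only [tr_add, tr_sq, tr_pow_four]

theorem mem_linKer_der_iff {a b : Fq n} :
    b ∈ linKer (der (fun x ↦ tr (x ^ 7)) a) ↔ linKerPoly a b = 0 := by
  refine ⟨fun ⟨c, hc⟩ ↦ eq_zero_of_forall_tr_mul_eq_zero fun x ↦ ?_,
    fun h ↦ ⟨_, fun x ↦ by rw [der_der_tr_pow_seven, h, mul_zero]⟩⟩
  obtain ⟨y, rfl⟩ : ∃ y, y ^ 4 = x := (iterateFrobeniusEquiv (Fq n) 2 2).surjective x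
  have hconst := (hc y).trans (hc 0).symm
  simpa [der_der_tr_pow_seven, tr_zero] using hconst

theorem ncard_linKer_der_inv_cube {x : Fq n} (hx : x ≠ 0) :
    (linKer (der (fun x ↦ tr (x ^ 7)) (x ^ 3)⁻¹)).ncard =
      {u : Fq n | ℘ (℘ (℘ u / x ^ 7)) = 0 ∨ ℘ (℘ (℘ u / x ^ 7)) = (x ^ 7) ^ 2}.ncard := by
  have hx3 : (x ^ 3)⁻¹ ≠ 0 := inv_ne_zero (pow_ne_zero 3 hx)
  rw [← Set.ncard_preimage_of_injective_subset_range (mul_right_injective₀ hx3)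
    (by simp [(mul_left_surjective₀ hx3).range_eq])]
  congr 1
  ext u
  exact mem_linKer_der_iff.trans (linKerPoly_inv_cube_eq_zero_iff hx u)

theorem ncard_preimage_artinSchreier_Fq {S : Set (Fq n)} (hS : ∀ v ∈ S, tr v = 0) :
    (℘ ⁻¹' S).ncard = 2 * S.ncard := by
  rw [ncard_preimage_artinSchreier (ZMod 2) hS, ZMod.card]

theorem ncard_linKer_der_inv_cube_of_tr_eq_one (hodd : Odd n) {x : Fq n} (hx : tr (x ^ 7) = 1) :
    (linKer (der (fun x ↦ tr (x ^ 7)) (x ^ 3)⁻¹)).ncard = 2 := by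
  have hx0 : x ≠ 0 := by
    rintro rfl
    simp [tr_zero] at hx
  have hsq (t : Fq n) : ℘ (℘ t) ≠ (x ^ 7) ^ 2 := fun h ↦ by
    simpa [tr_artinSchreier, tr_sq, hx] using congrArg tr h
  have hx7 (u : Fq n) : ℘ u ≠ x ^ 7 := fun h ↦ by
    simpa [tr_artinSchreier, hx] using congrArg tr h
  have hset : {u : Fq n | ℘ (℘ (℘ u / x ^ 7)) = 0 ∨ ℘ (℘ (℘ u / x ^ 7)) = (x ^ 7) ^ 2} =
      ℘ ⁻¹' {0} := by
    ext u
    calc ℘ (℘ (℘ u / x ^ 7)) = 0 ∨ ℘ (℘ (℘ u / x ^ 7)) = (x ^ 7) ^ 2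
        ↔ ℘ (℘ (℘ u / x ^ 7)) = ℘ (℘ 0) := by rw [or_iff_left (hsq _), map_zero, map_zero]
      _ ↔ ℘ u / x ^ 7 = 0 ∨ ℘ u / x ^ 7 = 1 := by
        rw [artinSchreier_artinSchreier_inj _ (finrank_Fq_ne_zero_of_odd hodd), map_zero,
          artinSchreier_zmod_two_eq_zero_iff]
      _ ↔ ℘ u = 0 := by simp [div_eq_one_iff_eq, hx0, hx7]
  rw [ncard_linKer_der_inv_cube hx0, hset, ncard_preimage_artinSchreier_Fq (by simp [tr_zero]),
    Set.ncard_singleton]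

theorem tr_artinSchreier_artinSchreier_mul {r t : Fq n}
    (ht : ℘ t = 0 ∨ ℘ t = ℘ (r ^ 2)) : tr (℘ (℘ r) * t) = 0 := by
  have hker (c : Fq n) (hc : ℘ c = 0) : tr (℘ (℘ r) * c) = 0 := by
    rcases artinSchreier_zmod_two_eq_zero_iff.1 hc with rfl | rfl
    · rw [mul_zero, tr_zero]
    · rw [mul_one, tr_artinSchreier]
  rcases ht with ht | ht
  · exact hker t ht
  · have hdiff := hker (t - r ^ 2) (by rw [map_sub, ht, sub_self])
    rw [← sub_add_cancel t (r ^ 2), mul_add, tr_add, hdiff, artinSchreier_artinSchreier_mul_sq,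
      tr_artinSchreier, add_zero]

theorem ncard_linKer_der_inv_cube_of_tr_eq_zero (hodd : Odd n) {x : Fq n} (hx0 : x ≠ 0)
    (hx : tr (x ^ 7) = 0) : (linKer (der (fun x ↦ tr (x ^ 7)) (x ^ 3)⁻¹)).ncard = 8 := by
  have hdeg := finrank_Fq_ne_zero_of_odd hodd
  have hx7 : x ^ 7 ≠ 0 := pow_ne_zero 7 hx0
  obtain ⟨r, hr⟩ := exists_artinSchreier_artinSchreier_eq _ hdeg hx
  have hr2 : ℘ (℘ (r ^ 2)) = (x ^ 7) ^ 2 := by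
    rw [artinSchreier_zmod_two_sq, artinSchreier_zmod_two_sq, hr]
  have hr0 : ℘ (r ^ 2) ≠ 0 := fun h ↦ pow_ne_zero 2 hx7 (by rw [← hr2, h, map_zero])
  let T : Set (Fq n) := ℘ ⁻¹' {0, ℘ (r ^ 2)}
  have hT : T.ncard = 4 := by
    rw [ncard_preimage_artinSchreier_Fq (by simp [tr_zero, tr_artinSchreier]),
      Set.ncard_pair hr0.symm]
  have hset : {u : Fq n | ℘ (℘ (℘ u / x ^ 7)) = 0 ∨ ℘ (℘ (℘ u / x ^ 7)) = (x ^ 7) ^ 2} =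
      ℘ ⁻¹' ((· / x ^ 7) ⁻¹' T) := by
    ext u
    have hzero : ℘ (℘ (℘ u / x ^ 7)) = 0 ↔ ℘ (℘ u / x ^ 7) = 0 := by
      simpa using artinSchreier_artinSchreier_inj _ hdeg (x := ℘ u / x ^ 7) (y := 0)
    rw [← hr2]
    exact or_congr hzero (artinSchreier_artinSchreier_inj _ hdeg)
  have htr : ∀ v ∈ (· / x ^ 7) ⁻¹' T, tr v = 0 := fun v hv ↦ by
    have hmul := tr_artinSchreier_artinSchreier_mul (t := v / x ^ 7) hv
    rwa [hr, mul_div_cancel₀ v hx7] at hmul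
  have hdiv : Function.Bijective (· / x ^ 7) := (Equiv.divRight₀ (x ^ 7) hx7).bijective
  rw [ncard_linKer_der_inv_cube hx0, hset, ncard_preimage_artinSchreier_Fq htr,
    Set.ncard_preimage_of_injective_subset_range hdiv.1 (by simp [hdiv.2.range_eq]), hT]

theorem pow_two_pow_sub_one_bijective {k : ℕ} (hn : n ≠ 0) (hk : k ≠ 0) (h : n.Coprime k) :
    Function.Bijective fun x : Fq n ↦ x ^ (2 ^ k - 1) := by
  have hgcd : (2 ^ n - 1).Coprime (2 ^ k - 1) := by
    rw [Nat.Coprime, Nat.pow_sub_one_gcd_pow_sub_one, h]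
    rfl
  rw [← GaloisField.card 2 n hn] at hgcd
  exact pow_left_bijective_of_coprime
    (Nat.sub_ne_zero_of_lt (Nat.one_lt_two_pow hk)) hgcd

theorem inv_cube_bijective (hodd : Odd n) : Function.Bijective fun x : Fq n ↦ (x ^ 3)⁻¹ :=
  inv_involutive.bijective.comp
    (pow_two_pow_sub_one_bijective hodd.pos.ne' two_ne_zero (Nat.coprime_two_right.2 hodd))

theorem tr_eq_zero_or_eq_one (x : Fq n) : tr x = 0 ∨ tr x = 1 :=
  (by decide : ∀ c : ZMod 2, c = 0 ∨ c = 1) (tr x)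

theorem ncard_linKer_der_eq_two_or_eq_eight (hodd : Odd n) {a : Fq n} (ha : a ≠ 0) :
    (linKer (der (fun x ↦ tr (x ^ 7)) a)).ncard = 2 ∨
      (linKer (der (fun x ↦ tr (x ^ 7)) a)).ncard = 8 := by
  obtain ⟨x, rfl⟩ := (inv_cube_bijective hodd).2 a
  have hx : x ≠ 0 := by
    rintro rfl
    simp at ha
  exact (tr_eq_zero_or_eq_one (x ^ 7)).symm.imp (ncard_linKer_der_inv_cube_of_tr_eq_one hodd)
    (ncard_linKer_der_inv_cube_of_tr_eq_zero hodd hx)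

theorem ncard_setOf_ncard_linKer_der_eq_two (hodd : Odd n) :
    {a : Fq n | a ≠ 0 ∧ (linKer (der (fun x ↦ tr (x ^ 7)) a)).ncard = 2}.ncard =
      wt (fun x : Fq n ↦ tr (x ^ 7)) := by
  have hbij := inv_cube_bijective hodd
  rw [wt, ← Set.ncard_preimage_of_injective_subset_range hbij.1 (by simp [hbij.2.range_eq])]
  congr 1
  ext x
  change (x ^ 3)⁻¹ ≠ 0 ∧ _ = 2 ↔ tr (x ^ 7) = 1
  rw [ne_eq, inv_eq_zero, pow_eq_zero_iff three_ne_zero]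
  refine ⟨fun ⟨hx, h2⟩ ↦ (tr_eq_zero_or_eq_one _).resolve_left fun h0 ↦ ?_, fun h1 ↦
    ⟨?_, ncard_linKer_der_inv_cube_of_tr_eq_one hodd h1⟩⟩
  · rw [ncard_linKer_der_inv_cube_of_tr_eq_zero hodd hx h0] at h2
    omega
  · rintro rfl
    simp [tr_zero] at h1

theorem ncard_setOf_ncard_linKer_der_eq_eight (hodd : Odd n) :
    {a : Fq n | a ≠ 0 ∧ (linKer (der (fun x ↦ tr (x ^ 7)) a)).ncard = 8}.ncard =
      2 ^ n - 1 - wt (fun x : Fq n ↦ tr (x ^ 7)) := by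
  let A (k : ℕ) : Set (Fq n) := {a | a ≠ 0 ∧ (linKer (der (fun x ↦ tr (x ^ 7)) a)).ncard = k}
  have hunion : A 2 ∪ A 8 = {0}ᶜ := by
    ext a
    refine ⟨fun h ↦ h.elim And.left And.left, fun ha ↦ ?_⟩
    exact (ncard_linKer_der_eq_two_or_eq_eight hodd ha).imp (⟨ha, ·⟩) (⟨ha, ·⟩)
  have hdisj : Disjoint (A 2) (A 8) :=
    Set.disjoint_left.2 fun a h2 h8 ↦ by simpa using h2.2.symm.trans h8.2
  have hsum : (A 2).ncard + (A 8).ncard = 2 ^ n - 1 := by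
    rw [← Set.ncard_union_eq hdisj, hunion, Set.ncard_compl, Set.ncard_singleton,
      GaloisField.card 2 n hodd.pos.ne']
  rw [← ncard_setOf_ncard_linKer_der_eq_two hodd, ← hsum]
  exact (Nat.add_sub_cancel_left ..).symm

theorem wt_comp_of_bijective (g : Fq n → ZMod 2) {σ : Fq n → Fq n} (hσ : Function.Bijective σ) :
    wt (g ∘ σ) = wt g :=
  Set.ncard_preimage_of_injective_subset_range (s := {x | g x = 1}) hσ.1
    (by simp [hσ.2.range_eq])

theorem wt_tr (hn : n ≠ 0) : wt (tr : Fq n → ZMod 2) = 2 ^ (n - 1) := by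
  have h := card_mul_ncard_preimage_singleton (φ := (Algebra.trace (ZMod 2) (Fq n)).toAddMonoidHom)
    (Algebra.trace_surjective (ZMod 2) (Fq n)) 1
  rw [Nat.card_zmod, GaloisField.card 2 n hn, ← mul_pow_sub_one hn] at h
  exact Nat.eq_of_mul_eq_mul_left two_pos h

theorem wt_tr_pow_seven (hn : n ≠ 0) (h3 : ¬ 3 ∣ n) :
    wt (fun x : Fq n ↦ tr (x ^ 7)) = 2 ^ (n - 1) := by
  have hcop : n.Coprime 3 := ((Nat.Prime.coprime_iff_not_dvd Nat.prime_three).2 h3).symm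
  rw [← wt_tr hn]
  exact wt_comp_of_bijective tr (pow_two_pow_sub_one_bijective hn three_ne_zero hcop)

end GaloisField

theorem linKer_card_der_tr_x7_odd_general (n : ℕ) (hodd : Odd n)
    (f : Fq n → ZMod 2) (hf : ∀ x, f x = tr (x ^ 7)) :
    (∀ a : Fq n, a ≠ 0 → (linKer (der f a)).ncard = 2 ∨ (linKer (der f a)).ncard = 8) ∧
    ({a : Fq n | a ≠ 0 ∧ (linKer (der f a)).ncard = 2}.ncard = wt (fun x : Fq n ↦ tr (x ^ 7)) ∧
      {a : Fq n | a ≠ 0 ∧ (linKer (der f a)).ncard = 8}.ncard =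
        2 ^ n - 1 - wt (fun x : Fq n ↦ tr (x ^ 7))) ∧
    (¬ 3 ∣ n →
      {a : Fq n | a ≠ 0 ∧ (linKer (der f a)).ncard = 2}.ncard = 2 ^ (n - 1) ∧
      {a : Fq n | a ≠ 0 ∧ (linKer (der f a)).ncard = 8}.ncard = 2 ^ (n - 1) - 1) := by
  obtain rfl : f = fun x ↦ tr (x ^ 7) := funext hf
  have htwo := ncard_setOf_ncard_linKer_der_eq_two hodd
  have height := ncard_setOf_ncard_linKer_der_eq_eight hodd
  refine ⟨fun a ↦ ncard_linKer_der_eq_two_or_eq_eight hodd, ⟨htwo, height⟩, fun h3 ↦ ?_⟩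
  have hwt := wt_tr_pow_seven hodd.pos.ne' h3
  have hdouble : 2 * 2 ^ (n - 1) = 2 ^ n := mul_pow_sub_one hodd.pos.ne' 2
  exact ⟨htwo.trans hwt, by rw [height, hwt]; omega⟩

/-- Distribution of linear-kernel sizes of derivatives of `tr(x^7)`, odd `n`. -/
theorem linKer_card_der_tr_x7_odd (n : ℕ) (hn : 0 < n) (hodd : Odd n)
    (f : Fq n → ZMod 2) (hf : ∀ x, f x = tr (x ^ 7)) :
    (∀ a : Fq n, a ≠ 0 →
      (linKer (der f a)).ncard = 2 ∨ (linKer (der f a)).ncard = 8) ∧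
    (¬ (3 ∣ n) →
      ({a : Fq n | a ≠ 0 ∧ (linKer (der f a)).ncard = 2}.ncard = 2 ^ (n - 1) ∧
       {a : Fq n | a ≠ 0 ∧ (linKer (der f a)).ncard = 8}.ncard = 2 ^ (n - 1) - 1)) ∧
    ((3 ∣ n) →
      ({a : Fq n | a ≠ 0 ∧ (linKer (der f a)).ncard = 2}.ncard
          = wt (fun x : Fq n => tr (x ^ 7)) ∧
       {a : Fq n | a ≠ 0 ∧ (linKer (der f a)).ncard = 8}.ncard
          = 2 ^ n - 1 - wt (fun x : Fq n => tr (x ^ 7)))) := by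
  obtain ⟨hcard, hcounts, hcounts'⟩ := linKer_card_der_tr_x7_odd_general n hodd f hf
  exact ⟨hcard, hcounts', fun _ ↦ hcounts⟩
end
end

section
/- Let d ≥ 1 be an odd integer. Then wt(tr(x^d)) ≥ 2^{n−1} − ((d−1)/2)·2^{n/2}, i.e., the number of x ∈ F with tr(x^d) = 1 is at least 2^{n−1} − ((d−1)/2)·2^{n/2}. -/
noncomputable section

/-!
Detecting `d`-th powers in `Fˣ` by the multiplicative characters `χ` with `χ ^ d = 1` expresses
`∑ x, ψ (x ^ d)` as the sum of the Gauss sums of the nontrivial such `χ`: the Gauss sum `-1` of the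
trivial character cancels the term `x = 0`. There are `gcd (q - 1, d) - 1` of them, each of absolute
value `√q`. For `q = 2 ^ n` and `ψ x = (-1) ^ tr x` the left-hand side is
`2 ^ n - 2 * wt (tr (x ^ d))`.
-/

open Finset Real

section PowerResidues

theorem mulChar_pow_eq_one_iff {M R : Type*} [CommMonoid M] [CommMonoidWithZero R] (d : ℕ)
    (χ : MulChar M R) : χ ^ d = 1 ↔ ∀ a ∈ (powMonoidHom d : Mˣ →* Mˣ).range, χ a = 1 := by
  simp [MulChar.eq_one_iff, MulChar.pow_apply_coe]

variable {M R : Type*} [CommMonoid M] [CommRing R]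

section Duality

variable [Finite M] [HasEnoughRootsOfUnity R (Monoid.exponent Mˣ)]

theorem subgroupOrderIsoSubgroupMulChar_range_powMonoidHom (d : ℕ) :
    MulChar.subgroupOrderIsoSubgroupMulChar M R (powMonoidHom d).range =
      OrderDual.toDual (powMonoidHom d).ker := by
  rw [← OrderDual.ofDual_inj, OrderDual.ofDual_toDual]
  ext χ
  rw [MulChar.mem_subgroupOrderIsoSubgroupMulChar_iff, ← mulChar_pow_eq_one_iff,
    MonoidHom.mem_ker, powMonoidHom_apply]

variable (R) in
theorem exists_pow_eq_iff_forall_mulChar (d : ℕ) (a : Mˣ) :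
    (∃ u : Mˣ, u ^ d = a) ↔ ∀ χ : MulChar M R, χ ^ d = 1 → χ a = 1 := by
  have h := MulChar.mem_subgroupOrderIsoSubgroupMulChar_symm_iff
    (X := (powMonoidHom d : MulChar M R →* MulChar M R).ker) (m := a)
  rwa [← subgroupOrderIsoSubgroupMulChar_range_powMonoidHom, OrderIso.symm_apply_apply] at h

variable (M R) in
theorem card_ker_powMonoidHom_mulChar (d : ℕ) :
    Nat.card (powMonoidHom d : MulChar M R →* MulChar M R).ker =
      Nat.card (powMonoidHom d : Mˣ →* Mˣ).ker := by
  rw [← OrderDual.ofDual_toDual (powMonoidHom d : MulChar M R →* MulChar M R).ker,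
    ← subgroupOrderIsoSubgroupMulChar_range_powMonoidHom,
    MulChar.card_subgroupOrderIsoSubgroupMulChar, ← Subgroup.index_eq_card, Subgroup.index_range]

end Duality

theorem card_filter_pow_eq_one {G : Type*} [CommGroup G] [Fintype G] [DecidableEq G] (d : ℕ) :
    #{x : G | x ^ d = 1} = Nat.card (powMonoidHom d : G →* G).ker := by
  simp [← Fintype.card_subtype, ← Nat.card_eq_fintype_card, MonoidHom.mem_ker]

theorem card_filter_pow_eq_pow {G : Type*} [CommGroup G] [Fintype G] [DecidableEq G] (d : ℕ)
    (y : G) : #{x : G | x ^ d = y ^ d} = #{x : G | x ^ d = 1} :=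
  card_equiv (Equiv.divRight y) (by simp [div_pow, div_eq_one])

theorem sum_mulChar_pow_eq_one_apply_eq_zero [IsDomain R] [Fintype (MulChar M R)]
    [DecidableEq (MulChar M R)] {d : ℕ} {χ₀ : MulChar M R} (hχ₀ : χ₀ ^ d = 1) {a : M}
    (ha : χ₀ a ≠ 1) :
    ∑ χ : MulChar M R with χ ^ d = 1, χ a = 0 := by
  refine eq_zero_of_mul_eq_self_left ha ?_
  rw [mul_sum]
  refine sum_equiv (Equiv.mulLeft χ₀) ?_ ?_ <;> simp [mul_pow, hχ₀]

variable [Fintype M] [DecidableEq M] [IsDomain R] [HasEnoughRootsOfUnity R (Monoid.exponent Mˣ)]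
  [Fintype (MulChar M R)] [DecidableEq (MulChar M R)]

theorem sum_mulChar_pow_eq_one_apply (d : ℕ) (a : Mˣ) :
    ∑ χ : MulChar M R with χ ^ d = 1, χ a = #{u : Mˣ | u ^ d = a} := by
  by_cases ha : ∃ v : Mˣ, v ^ d = a
  · have hone : ∀ χ ∈ ({χ | χ ^ d = 1} : Finset (MulChar M R)), χ a = 1 := by
      simpa using (exists_pow_eq_iff_forall_mulChar R d a).1 ha
    obtain ⟨v, rfl⟩ := ha
    rw [sum_congr rfl hone, sum_const, nsmul_one, card_filter_pow_eq_pow, card_filter_pow_eq_one,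
      card_filter_pow_eq_one, card_ker_powMonoidHom_mulChar]
  · have hempty : #{u : Mˣ | u ^ d = a} = 0 := by simpa using ha
    rw [hempty, Nat.cast_zero]
    rw [exists_pow_eq_iff_forall_mulChar R] at ha
    push Not at ha
    obtain ⟨χ₀, hχ₀, hne⟩ := ha
    exact sum_mulChar_pow_eq_one_apply_eq_zero hχ₀ hne

theorem sum_units_pow_eq_sum_mulChar (d : ℕ) (g : M → R) :
    ∑ u : Mˣ, g ((u ^ d : Mˣ) : M) =
      ∑ χ : MulChar M R with χ ^ d = 1, ∑ a : M, χ a * g a := by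
  have hunits (χ : MulChar M R) : ∑ a : M, χ a * g a = ∑ a : Mˣ, χ a * g a :=
    (Fintype.sum_of_injective _ Units.val_injective _ _
      (fun a ha ↦ by rw [χ.map_nonunit ha, zero_mul]) fun _ ↦ rfl).symm
  calc ∑ u : Mˣ, g ((u ^ d : Mˣ) : M)
    _ = ∑ a : Mˣ, #{u : Mˣ | u ^ d = a} * g a := by
      simp only [← sum_fiberwise univ (fun u : Mˣ ↦ u ^ d) (fun u ↦ g ((u ^ d : Mˣ) : M)),
        ← nsmul_eq_mul, ← sum_const]
      refine sum_congr rfl fun a _ ↦ sum_congr rfl fun u hu ↦ ?_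
      rw [(mem_filter.1 hu).2]
    _ = ∑ a : Mˣ, ∑ χ : MulChar M R with χ ^ d = 1, χ a * g a := by
      simp only [← sum_mulChar_pow_eq_one_apply (R := R), sum_mul]
    _ = ∑ χ : MulChar M R with χ ^ d = 1, ∑ a : M, χ a * g a := by
      simp only [hunits]
      exact sum_comm

end PowerResidues

section GaussSums

variable {F : Type*} [Field F] [Fintype F]

theorem norm_gaussSum {χ : MulChar F ℂ} (hχ : χ ≠ 1) {ψ : AddChar F ℂ} (hψ : ψ ≠ 1) :
    ‖gaussSum χ ψ‖ = √(Fintype.card F) := by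
  rw [← sqrt_sq (norm_nonneg _)]
  congr 1
  have h := gaussSum_mul_gaussSum_eq_card hχ (AddChar.IsPrimitive.of_ne_one hψ)
  rw [← star_gaussSum_eq, ← starRingEnd_apply, Complex.mul_conj'] at h
  exact_mod_cast h

variable {R : Type*} [CommRing R] [HasEnoughRootsOfUnity R (Monoid.exponent Fˣ)]
  [Fintype (MulChar F R)] [DecidableEq (MulChar F R)]

theorem card_mulChar_pow_eq_one_and_ne_one (d : ℕ) :
    #{χ : MulChar F R | χ ^ d = 1 ∧ χ ≠ 1} = (Fintype.card F - 1).gcd d - 1 := by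
  classical
  rw [← filter_filter, filter_ne', card_erase_of_mem (by simp), card_filter_pow_eq_one,
    card_ker_powMonoidHom_mulChar, IsCyclic.card_powMonoidHom_ker, Nat.card_units,
    Nat.card_eq_fintype_card]

theorem sum_eq_apply_zero_add_sum_units {G₀ A : Type*} [GroupWithZero G₀] [Fintype G₀]
    [DecidableEq G₀] [AddCommMonoid A] (g : G₀ → A) :
    ∑ x, g x = g 0 + ∑ u : G₀ˣ, g u := by
  rw [Fintype.sum_eq_add_sum_subtype_ne g 0]
  exact congrArg (g 0 + ·) (unitsEquivNeZero.sum_comp fun x : {x : G₀ // x ≠ 0} ↦ g x).symm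

theorem sum_addChar_pow_eq_sum_gaussSum [IsDomain R] {ψ : AddChar F R} (hψ : ψ ≠ 1)
    {d : ℕ} (hd : d ≠ 0) :
    ∑ x, ψ (x ^ d) = ∑ χ : MulChar F R with χ ^ d = 1 ∧ χ ≠ 1, gaussSum χ ψ := by
  classical
  calc ∑ x, ψ (x ^ d)
    _ = 1 + ∑ u : Fˣ, ψ ((u ^ d : Fˣ) : F) := by
      simp [sum_eq_apply_zero_add_sum_units fun x ↦ ψ (x ^ d), hd]
    _ = 1 + ∑ χ : MulChar F R with χ ^ d = 1, gaussSum χ ψ := by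
      rw [sum_units_pow_eq_sum_mulChar d ψ]
      rfl
    _ = 1 + (gaussSum 1 ψ + ∑ χ : MulChar F R with χ ^ d = 1 ∧ χ ≠ 1, gaussSum χ ψ) := by
      rw [← filter_filter, filter_ne', add_sum_erase _ (fun χ ↦ gaussSum χ ψ) (by simp)]
    _ = ∑ χ : MulChar F R with χ ^ d = 1 ∧ χ ≠ 1, gaussSum χ ψ := by
      rw [gaussSum_one_left hψ, add_neg_cancel_left]

theorem norm_sum_addChar_pow_le {ψ : AddChar F ℂ} (hψ : ψ ≠ 1) {d : ℕ} (hd : d ≠ 0) :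
    ‖∑ x, ψ (x ^ d)‖ ≤ ((Fintype.card F - 1).gcd d - 1) * √(Fintype.card F) := by
  classical
  have := Fintype.ofFinite (MulChar F ℂ)
  calc ‖∑ x, ψ (x ^ d)‖
    _ = ‖∑ χ : MulChar F ℂ with χ ^ d = 1 ∧ χ ≠ 1, gaussSum χ ψ‖ := by
      rw [sum_addChar_pow_eq_sum_gaussSum hψ hd]
    _ ≤ ∑ χ : MulChar F ℂ with χ ^ d = 1 ∧ χ ≠ 1, √(Fintype.card F) :=
      norm_sum_le_of_le _ fun χ hχ ↦ (norm_gaussSum (mem_filter.1 hχ).2.2 hψ).le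
    _ = ((Fintype.card F - 1).gcd d - 1) * √(Fintype.card F) := by
      rw [sum_const, nsmul_eq_mul, card_mulChar_pow_eq_one_and_ne_one,
        Nat.cast_pred (Nat.gcd_pos_of_pos_right _ hd.pos)]

end GaussSums

section Trace

/-- The canonical additive character `x ↦ exp (2πi Tr(x) / p)` of an extension `F` of `𝔽_p`. -/
def traceAddChar (p : ℕ) [NeZero p] (F : Type*) [CommRing F] [Algebra (ZMod p) F] : AddChar F ℂ :=
  ZMod.stdAddChar.compAddMonoidHom (Algebra.trace (ZMod p) F).toAddMonoidHom

theorem traceAddChar_apply (p : ℕ) [NeZero p] {F : Type*} [CommRing F] [Algebra (ZMod p) F]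
    (x : F) : traceAddChar p F x = ZMod.stdAddChar (Algebra.trace (ZMod p) F x) :=
  rfl

theorem traceAddChar_ne_one (p : ℕ) [Fact p.Prime] (F : Type*) [Field F] [Finite F]
    [Algebra (ZMod p) F] : traceAddChar p F ≠ 1 := by
  obtain ⟨x, hx⟩ := Algebra.trace_surjective (ZMod p) F 1
  intro h
  have hone : ZMod.stdAddChar (1 : ZMod p) = 1 := by
    rw [← hx, ← traceAddChar_apply, h, AddChar.one_apply]
  exact one_ne_zero (ZMod.injective_stdAddChar (hone.trans (AddChar.map_zero_eq_one _).symm))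

end Trace

section Weight

theorem stdAddChar_two_apply (t : ZMod 2) :
    ZMod.stdAddChar t = 1 - 2 * if t = 1 then 1 else 0 := by
  have hone : ZMod.stdAddChar (1 : ZMod 2) = -1 := by
    rw [← Int.cast_one, ZMod.stdAddChar_coe, ← Complex.exp_pi_mul_I]
    congr 1
    push_cast
    ring
  obtain rfl | rfl : t = 0 ∨ t = 1 := by decide +revert
  · simp
  · rw [hone, if_pos rfl]
    norm_num

theorem sum_stdAddChar_two_comp {α : Type*} [Fintype α] (f : α → ZMod 2) :
    ∑ x, ZMod.stdAddChar (f x) = Fintype.card α - 2 * {x | f x = 1}.ncard := by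
  classical
  rw [Set.ncard_eq_toFinset_card', Set.toFinset_ofPred]
  simp only [stdAddChar_two_apply, sum_sub_distrib, ← mul_sum, sum_boole, sum_const, card_univ,
    nsmul_one]

theorem abs_wt_tr_pow_sub_le {n : ℕ} (hn : n ≠ 0) {d : ℕ} (hd : d ≠ 0) :
    |(wt (fun x : Fq n ↦ tr (x ^ d)) : ℝ) - 2 ^ n / 2| ≤
      ((Nat.gcd (2 ^ n - 1) d : ℝ) - 1) / 2 * √(2 ^ n) := by
  have := Fintype.ofFinite (Fq n)
  have hcard : Fintype.card (Fq n) = 2 ^ n := by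
    rw [← Nat.card_eq_fintype_card, GaloisField.card 2 n hn]
  have hsum : ∑ x : Fq n, traceAddChar 2 (Fq n) (x ^ d) =
      ((2 ^ n - 2 * wt (fun x : Fq n ↦ tr (x ^ d)) : ℝ) : ℂ) := by
    simp only [traceAddChar_apply]
    rw [sum_stdAddChar_two_comp, hcard]
    push_cast
    rfl
  have hle := norm_sum_addChar_pow_le (traceAddChar_ne_one 2 (Fq n)) hd
  rw [hsum, Complex.norm_real, norm_eq_abs, hcard, abs_sub_comm] at hle
  push_cast at hle
  rw [abs_le] at hle ⊢
  constructor <;> linarith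

end Weight

theorem wt_tr_pow_ge_general {n : ℕ} (hn : n ≠ 0) {d : ℕ} (hd : d ≠ 0) :
    (wt (fun x : Fq n => tr (x ^ d)) : ℝ)
      ≥ (2:ℝ) ^ ((n:ℝ) - 1) - (((d:ℝ) - 1) / 2) * (2:ℝ) ^ ((n:ℝ) / 2) := by
  have hpow : (2 : ℝ) ^ ((n : ℝ) - 1) = 2 ^ n / 2 := by
    rw [rpow_sub_one two_ne_zero, rpow_natCast]
  have hsqrt : (2 : ℝ) ^ ((n : ℝ) / 2) = √(2 ^ n) := by
    rw [sqrt_eq_rpow, ← rpow_natCast, ← rpow_mul zero_le_two, mul_one_div]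
  have hgcd : (Nat.gcd (2 ^ n - 1) d : ℝ) ≤ d := mod_cast Nat.gcd_le_right _ hd.pos
  have hle : ((Nat.gcd (2 ^ n - 1) d : ℝ) - 1) / 2 * √(2 ^ n) ≤ ((d : ℝ) - 1) / 2 * √(2 ^ n) := by
    gcongr
  rw [hpow, hsqrt]
  linarith [(abs_le.1 (abs_wt_tr_pow_sub_le hn hd)).1]

/-- Weil-bound consequence: lower bound on the weight of `tr(x^d)` for odd `d`. -/
theorem wt_tr_pow_ge (n : ℕ) (hn : 0 < n) (d : ℕ) (hd : 1 ≤ d) (hodd : Odd d) :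
    (wt (fun x : Fq n => tr (x ^ d)) : ℝ)
      ≥ (2:ℝ) ^ ((n:ℝ) - 1) - (((d:ℝ) - 1) / 2) * (2:ℝ) ^ ((n:ℝ) / 2) := by
  exact wt_tr_pow_ge_general hn.ne' (Nat.one_le_iff_ne_zero.1 hd)
end
end

section
/- Let n be an even positive integer. For every a ∈ F with a ≠ 0, the number of b ∈ F \ {0, 1} such that the equation R_{a,b}(x) = 0 has exactly 4 solutions x ∈ F is at least (2^{n+1} − 2^{n/2 + 1} − 4)/3. -/
noncomputable section

/-- The polynomial map `R_{a,b}` from the paper. -/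
def Rpoly {n : ℕ} (a b x : Fq n) : Fq n :=
  a ^ 30 * (b ^ 2 + b) ^ 6 * ((x ^ 2 + x) ^ 2 + (x ^ 2 + x) * (b ^ 2 + b)) ^ 4
    + a ^ 15 * (b ^ 2 + b) ^ 5 * ((x ^ 2 + x) ^ 2 + (x ^ 2 + x) * (b ^ 2 + b))

/-- The polynomial map `Q_{a,b}` from the paper. -/
def Qpoly {n : ℕ} (a b x : Fq n) : Fq n :=
  ((b ^ 2 + b)⁻¹) ^ 4 * Rpoly a b x * (Rpoly a b x + 1)

/-- The polynomial map `P_{a,b}` from the paper. -/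
def Ppoly {n : ℕ} (a b x : Fq n) : Fq n :=
  Qpoly a b x * (Qpoly a b x + 1)

/-!
Put `β = b ^ 2 + b` and
`L = (x ^ 2 + x) ^ 2 + (x ^ 2 + x) * β = x * (x + 1) * (x + b) * (x + b + 1)`.
Then `R_{a,b} = a ^ 15 * β ^ 5 * L * (a ^ 15 * β * L ^ 3 + 1)`, and a root of the last factor
writes `β` as the cube of `(a ^ 5 * L)⁻¹`. So if `β` is not a cube, the roots are the four distinct
elements `0`, `1`, `b`, `b + 1`.

In characteristic two `β = b * (1 - b)`. For a character `χ` of order `d`, expanding the condition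
`χ (b * (1 - b)) = 1` over the powers of `χ` shows that `d` times the number of `b` satisfying it is
the sum of the Jacobi sums `J(χ ^ j, χ ^ j)`, `j < d`. The term `j = 0` is `q - 2`, and the others
have absolute value at most `√q`. The case `d = 3`, available because `3 ∣ 2 ^ n - 1` for even `n`,
bounds from below the number of `b` for which `β` is not a cube.
-/

section JacobiSum

variable {F : Type*} [Field F]

lemma norm_jacobiSum_eq_sqrt_card [Fintype F] {χ φ : MulChar F ℂ} (hχ : χ ≠ 1) (hφ : φ ≠ 1)
    (hχφ : χ * φ ≠ 1) : ‖jacobiSum χ φ‖ = √(Fintype.card F) := by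
  have hconj : jacobiSum χ⁻¹ φ⁻¹ = starRingEnd ℂ (jacobiSum χ φ) := by
    simp only [jacobiSum, map_sum, map_mul, ← MulChar.star_apply', RCLike.star_def]
  have hchar : ringChar ℂ ≠ ringChar F := by
    rw [ringChar.eq_zero]
    exact (CharP.ringChar_ne_zero_of_finite F).symm
  have hmul := jacobiSum_mul_jacobiSum_inv hchar hχ hφ hχφ
  rw [hconj, Complex.mul_conj'] at hmul
  rw [eq_comm, Real.sqrt_eq_iff_eq_sq (Nat.cast_nonneg _) (norm_nonneg _)]
  exact_mod_cast hmul.symm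

lemma norm_jacobiSum_le_sqrt_card [Fintype F] {χ φ : MulChar F ℂ} (hχ : χ ≠ 1) (hφ : φ ≠ 1) :
    ‖jacobiSum χ φ‖ ≤ √(Fintype.card F) := by
  by_cases hχφ : χ * φ = 1
  · have hnorm : ‖χ (-1)‖ = 1 := by
      refine Complex.norm_eq_one_of_pow_eq_one (n := 2) ?_ two_ne_zero
      rw [← map_pow, neg_one_sq, map_one]
    rw [← inv_eq_of_mul_eq_one_right hχφ, jacobiSum_nontrivial_inv hχ, norm_neg, hnorm,
      Real.one_le_sqrt]
    exact_mod_cast Fintype.card_pos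
  · exact (norm_jacobiSum_eq_sqrt_card hχ hφ hχφ).le

lemma sum_range_orderOf_pow_apply {M R : Type*} [CommMonoid M] [CommRing R] [IsDomain R]
    (χ : MulChar M R) (u : M) [Decidable (χ u = 1)] :
    ∑ j ∈ Finset.range (orderOf χ), (χ ^ j) u = if χ u = 1 then (orderOf χ : R) else 0 := by
  by_cases hu : IsUnit u
  · obtain ⟨u, rfl⟩ := hu
    simp only [MulChar.pow_apply_coe]
    split_ifs with h
    · simp only [h, one_pow, Finset.sum_const, Finset.card_range, nsmul_one]
    · refine (mul_eq_zero.mp ?_).resolve_left (sub_ne_zero.mpr (Ne.symm h))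
      rw [mul_neg_geom_sum, ← MulChar.pow_apply_coe, pow_orderOf_eq_one, MulChar.one_apply_coe,
        sub_self]
  · simp only [MulChar.map_nonunit _ hu, Finset.sum_const_zero, zero_ne_one, if_false]

lemma orderOf_mul_ncard_apply_mul_one_sub_eq_one {A R : Type*} [CommRing A] [Fintype A]
    [CommRing R] [IsDomain R] (χ : MulChar A R) :
    (orderOf χ * {x : A | χ (x * (1 - x)) = 1}.ncard : R)
      = ∑ j ∈ Finset.range (orderOf χ), jacobiSum (χ ^ j) (χ ^ j) := by
  classical
  simp only [jacobiSum, ← map_mul]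
  rw [Finset.sum_comm]
  simp only [sum_range_orderOf_pow_apply]
  rw [← Finset.sum_filter, Finset.sum_const, nsmul_eq_mul, mul_comm, Set.ncard_eq_toFinset_card',
    Set.toFinset_ofPred]

lemma orderOf_mul_ncard_apply_mul_one_sub_eq_one_le [Fintype F] (χ : MulChar F ℂ) :
    (orderOf χ * {x : F | χ (x * (1 - x)) = 1}.ncard : ℝ)
      ≤ Fintype.card F - 2 + (orderOf χ - 1) * √(Fintype.card F) := by
  obtain ⟨m, hm⟩ : ∃ m, orderOf χ = m + 1 :=
    Nat.exists_eq_succ_of_ne_zero χ.orderOf_pos.ne'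
  have hcount := orderOf_mul_ncard_apply_mul_one_sub_eq_one χ
  rw [hm, Finset.sum_range_succ', pow_zero, jacobiSum_one_one] at hcount
  have hterm : ∀ j ∈ Finset.range m,
      ‖jacobiSum (χ ^ (j + 1)) (χ ^ (j + 1))‖ ≤ √(Fintype.card F) := by
    intro j hj
    have hne : χ ^ (j + 1) ≠ 1 :=
      pow_ne_one_of_lt_orderOf j.succ_ne_zero (hm ▸ Nat.succ_lt_succ (Finset.mem_range.mp hj))
    exact norm_jacobiSum_le_sqrt_card hne hne
  have hreal : ∑ j ∈ Finset.range m, jacobiSum (χ ^ (j + 1)) (χ ^ (j + 1))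
      = (((m + 1) * {x : F | χ (x * (1 - x)) = 1}.ncard - (Fintype.card F - 2) : ℝ) : ℂ) := by
    push_cast at hcount ⊢
    linear_combination -hcount
  have hsum := norm_sum_le_of_le _ hterm
  rw [hreal, Complex.norm_real, Finset.sum_const, Finset.card_range, nsmul_eq_mul] at hsum
  rw [hm]
  push_cast
  linarith [(Real.le_norm_self _).trans hsum]

lemma le_mul_ncard_forall_pow_ne_mul_one_sub [Finite F] {d : ℕ} (hd : d ∣ Nat.card F - 1) :
    ((d : ℝ) - 1) * (Nat.card F - 2 - √(Nat.card F))
      ≤ d * {x : F | ∀ c, c ^ d ≠ x * (1 - x)}.ncard := by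
  cases nonempty_fintype F
  rw [Nat.card_eq_fintype_card] at hd ⊢
  have hd0 : d ≠ 0 := ne_zero_of_dvd_ne_zero (Nat.sub_ne_zero_of_lt Fintype.one_lt_card) hd
  obtain ⟨χ, rfl⟩ := MulChar.exists_mulChar_orderOf F hd (Complex.isPrimitiveRoot_exp d hd0)
  have hcover : Set.univ ⊆ {x : F | ∀ c, c ^ orderOf χ ≠ x * (1 - x)}
      ∪ ({0, 1} ∪ {x : F | χ (x * (1 - x)) = 1}) := by
    intro x _
    by_cases hx : ∀ c, c ^ orderOf χ ≠ x * (1 - x)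
    · exact .inl hx
    push Not at hx
    obtain ⟨c, hc⟩ := hx
    by_cases hc0 : c = 0
    · rw [hc0, zero_pow hd0, eq_comm, mul_eq_zero, sub_eq_zero, eq_comm (a := (1 : F))] at hc
      exact .inr (.inl hc)
    · right; right
      rw [Set.mem_ofPred_eq, ← hc, map_pow, ← MulChar.pow_apply' χ hd0, pow_orderOf_eq_one,
        MulChar.one_apply (isUnit_iff_ne_zero.mpr hc0)]
  have hcard : (Fintype.card F : ℝ) ≤ {x : F | ∀ c, c ^ orderOf χ ≠ x * (1 - x)}.ncard
      + (2 + {x : F | χ (x * (1 - x)) = 1}.ncard) := by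
    have h := Set.ncard_le_ncard hcover
    grw [Set.ncard_univ, Nat.card_eq_fintype_card, Set.ncard_union_le, Set.ncard_union_le,
      Set.ncard_pair zero_ne_one] at h
    exact_mod_cast h
  have hpow := orderOf_mul_ncard_apply_mul_one_sub_eq_one_le χ
  linear_combination (orderOf χ : ℝ) * hcard + hpow

end JacobiSum

lemma artinSchreier_sq_add_mul_eq_prod {K : Type*} [CommRing K] [CharP K 2] (b x : K) :
    (x ^ 2 + x) ^ 2 + (x ^ 2 + x) * (b ^ 2 + b) = x * (x + 1) * (x + b) * (x + (b + 1)) := by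
  linear_combination (-(x ^ 3 * b) - x ^ 2 * b) * (CharTwo.two_eq_zero : (2 : K) = 0)

lemma artinSchreier_eq_mul_one_sub {K : Type*} [CommRing K] [CharP K 2] (b : K) :
    b ^ 2 + b = b * (1 - b) := by
  rw [CharTwo.sub_eq_add]
  ring

lemma artinSchreier_ne_zero_iff {K : Type*} [CommRing K] [NoZeroDivisors K] [CharP K 2] {b : K} :
    b ^ 2 + b ≠ 0 ↔ b ≠ 0 ∧ b ≠ 1 := by
  rw [sq, ← mul_add_one, mul_ne_zero_iff, Ne, Ne, CharTwo.add_eq_zero]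

lemma ne_zero_of_forall_pow_ne {M : Type*} [MonoidWithZero M] {d : ℕ} (hd : d ≠ 0) {u : M}
    (hu : ∀ c, c ^ d ≠ u) : u ≠ 0 :=
  fun h ↦ hu 0 (by rw [h, zero_pow hd])

namespace Rpoly

variable {n : ℕ} {a b : Fq n}

lemma eq_zero_iff (ha : a ≠ 0) (hb : ∀ c, c ^ 3 ≠ b ^ 2 + b) (x : Fq n) :
    Rpoly a b x = 0 ↔ (x ^ 2 + x) ^ 2 + (x ^ 2 + x) * (b ^ 2 + b) = 0 := by
  unfold Rpoly
  set β := b ^ 2 + b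
  set L := (x ^ 2 + x) ^ 2 + (x ^ 2 + x) * β
  have hβ : β ≠ 0 := ne_zero_of_forall_pow_ne three_ne_zero hb
  have hfactor : a ^ 30 * β ^ 6 * L ^ 4 + a ^ 15 * β ^ 5 * L
      = a ^ 15 * β ^ 5 * (L * (a ^ 15 * β * L ^ 3 + 1)) := by ring
  have hne : a ^ 15 * β * L ^ 3 + 1 ≠ 0 := by
    intro h
    refine hb (a ^ 5 * L)⁻¹ ?_
    rw [inv_pow]
    refine inv_eq_of_mul_eq_one_right ?_
    linear_combination CharTwo.add_eq_zero.mp h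
  simp only [hfactor, mul_eq_zero, pow_ne_zero _ ha, pow_ne_zero _ hβ, hne, false_or, or_false]

lemma ncard_setOf_eq_zero (ha : a ≠ 0) (hb : ∀ c, c ^ 3 ≠ b ^ 2 + b) :
    {x | Rpoly a b x = 0}.ncard = 4 := by
  classical
  have hroots : {x | Rpoly a b x = 0} = (({0, 1, b, b + 1} : Finset (Fq n)) : Set (Fq n)) := by
    ext x
    simp only [Set.mem_ofPred_eq, eq_zero_iff ha hb, artinSchreier_sq_add_mul_eq_prod, mul_eq_zero,
      CharTwo.add_eq_zero, or_assoc, Finset.coe_insert, Finset.coe_singleton,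
      Set.mem_insert_iff, Set.mem_singleton_iff]
  obtain ⟨hb0, hb1⟩ := artinSchreier_ne_zero_iff.mp (ne_zero_of_forall_pow_ne three_ne_zero hb)
  have hb1' : b + 1 ≠ 0 := fun h ↦ hb1 (CharTwo.add_eq_zero.mp h)
  rw [hroots, Set.ncard_coe_finset]
  simp only [Finset.card_insert_eq_ite, Finset.mem_insert, Finset.mem_singleton, zero_ne_one,
    hb0.symm, hb1.symm, hb1'.symm, hb0, left_eq_add, right_eq_add, one_ne_zero, or_false, if_false,
    Finset.card_singleton]

end Rpoly

/-- For even `n`, many `b` give exactly 4 roots of `R_{a,b}`. -/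
theorem count_b_Rpoly_four_roots (n : ℕ) (hn : 0 < n) (hev : Even n)
    (a : Fq n) (ha : a ≠ 0) :
    ({b : Fq n | b ≠ 0 ∧ b ≠ 1 ∧ {x : Fq n | Rpoly a b x = 0}.ncard = 4}.ncard : ℝ)
      ≥ ((2:ℝ) ^ ((n:ℝ) + 1) - (2:ℝ) ^ ((n:ℝ) / 2 + 1) - 4) / 3 := by
  have hdvd : 3 ∣ Nat.card (Fq n) - 1 := by
    rw [GaloisField.card 2 n hn.ne']
    exact Nat.pow_sub_one_dvd_pow_sub_one 2 hev.two_dvd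
  have hsub : {b : Fq n | ∀ c, c ^ 3 ≠ b * (1 - b)}
      ⊆ {b | b ≠ 0 ∧ b ≠ 1 ∧ {x | Rpoly a b x = 0}.ncard = 4} := by
    intro b hb
    simp only [Set.mem_ofPred_eq, ← artinSchreier_eq_mul_one_sub] at hb
    obtain ⟨hb0, hb1⟩ := artinSchreier_ne_zero_iff.mp (ne_zero_of_forall_pow_ne three_ne_zero hb)
    exact ⟨hb0, hb1, Rpoly.ncard_setOf_eq_zero ha hb⟩
  have hcount := (le_mul_ncard_forall_pow_ne_mul_one_sub hdvd).trans
    (mul_le_mul_of_nonneg_left (Nat.cast_le.mpr (Set.ncard_le_ncard hsub)) (Nat.cast_nonneg 3))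
  have hpow : (2 : ℝ) ^ ((n : ℝ) + 1) = 2 * 2 ^ n := by
    rw [Real.rpow_add_one two_ne_zero, Real.rpow_natCast, mul_comm]
  have hsqrt : (2 : ℝ) ^ ((n : ℝ) / 2 + 1) = 2 * √(2 ^ n) := by
    rw [Real.sqrt_eq_rpow, ← Real.rpow_natCast_mul zero_le_two, mul_one_div,
      Real.rpow_add_one two_ne_zero, mul_comm]
  rw [GaloisField.card 2 n hn.ne'] at hcount
  push_cast at hcount
  rw [hpow, hsqrt]
  linarith
end
end

section
/- Let n be an odd positive integer, and let a, b ∈ F with a ≠ 0 and b ∉ {0, 1}. If the equation R_{a,b}(x) = 0 has exactly 4 solutions x ∈ F, then the equation P_{a,b}(x) = 0 has at most 8 solutions x ∈ F. -/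
noncomputable section

/-!
The map `R` is additive, and `P` vanishes exactly where `R` takes a value in the additive group
`{0, 1, b⁴, 1 + b⁴}`. Hence the roots of `P` fill at most two cosets of `ker R`, unless `R` takes
both values `1` and `b⁴`.

Put `c = b² + b`, `L(x) = x (x + 1) (x + b) (x + b + 1)` and `i³ = a¹⁵ c`; the cube root exists
because `3 ∤ 2ⁿ - 1` for odd `n`. Then `R = (c² i)² ((i L)⁴ + i L)`. If `R` takes the values `1`
and `b⁴`, extracting square roots gives `m` and `k` with `m⁴ + m = 1 / (c² i)` and
`k⁴ + k = b² (m⁴ + m)`. The element `z = b (m² + m) + k² + k` then satisfies `L(z) = 1 / i`,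
so it is a root of `R` besides the four roots of `L`.
-/

section Preimage

variable {G H : Type*} [AddGroup G] [AddGroup H]

lemma ncard_preimage_eq_mul_card_ker (f : G →+ H) (S : Set H) :
    (f ⁻¹' S).ncard = (S ∩ Set.range f).ncard * Nat.card f.ker := by
  choose s hs using fun y : ↥(S ∩ Set.range f) => y.2.2
  let e : ↥(f ⁻¹' S) ≃ ↥(S ∩ Set.range f) × f.ker :=
    { toFun x :=
        let y : ↥(S ∩ Set.range f) := ⟨f x, x.2, x, rfl⟩
        (y, ⟨-s y + x, by simp [y, AddMonoidHom.mem_ker, hs]⟩)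
      invFun p := ⟨s p.1 + p.2, by simp [hs, AddMonoidHom.mem_ker.mp p.2.2, p.1.2.1]⟩
      left_inv x := by simp
      right_inv p := by
        have hp : f (s p.1 + p.2) = p.1 := by simp [hs, AddMonoidHom.mem_ker.mp p.2.2]
        ext <;> simp [hp] }
  rw [← Nat.card_coe_set_eq, Nat.card_congr e, Nat.card_prod, Nat.card_coe_set_eq]

lemma exists_inter_subset_pair (A : AddSubgroup G) {u v : G} (h : u ∈ A → v ∉ A) :
    ∃ y, {0, u, v, u + v} ∩ (A : Set G) ⊆ {0, y} := by
  by_cases hv : v ∈ A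
  · have hu : u ∉ A := fun hu => h hu hv
    refine ⟨v, ?_⟩
    rintro r ⟨rfl | rfl | rfl | rfl, hr⟩ <;> simp_all [A.add_mem_cancel_right hv]
  · by_cases hu : u ∈ A
    · refine ⟨u, ?_⟩
      rintro r ⟨rfl | rfl | rfl | rfl, hr⟩ <;> simp_all [A.add_mem_cancel_left hu]
    · refine ⟨u + v, ?_⟩
      rintro r ⟨rfl | rfl | rfl | rfl, hr⟩ <;> simp_all

end Preimage

section Cubes

lemma pow_surjective_of_coprime_card_sub_one {G₀ : Type*} [GroupWithZero G₀] {k : ℕ}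
    (hk : k ≠ 0) (h : (Nat.card G₀ - 1).Coprime k) : Function.Surjective fun x : G₀ => x ^ k := by
  intro x
  obtain rfl | hx := eq_or_ne x 0
  · exact ⟨0, zero_pow hk⟩
  · rw [← Nat.card_units] at h
    obtain ⟨y, hy⟩ := h.pow_left_bijective.surjective (Units.mk0 x hx)
    exact ⟨y, by simpa using congrArg Units.val hy⟩

lemma coprime_two_pow_sub_one_three {n : ℕ} (hn : Odd n) : (2 ^ n - 1).Coprime 3 := by
  obtain ⟨k, rfl⟩ := hn
  have hmod : 4 ^ k % 3 = 1 := by simp [Nat.pow_mod]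
  have hpow : 2 ^ (2 * k + 1) = 2 * 4 ^ k := by rw [pow_succ, pow_mul]; ring
  rw [Nat.coprime_comm, Nat.prime_three.coprime_iff_not_dvd, hpow]
  omega

lemma exists_cube_eq_of_odd {n : ℕ} (hn : Odd n) (x : Fq n) : ∃ y, y ^ 3 = x := by
  refine pow_surjective_of_coprime_card_sub_one three_ne_zero ?_ x
  rw [GaloisField.card 2 n hn.pos.ne']
  exact coprime_two_pow_sub_one_three hn

end Cubes

section CommRing

variable {K : Type*} [CommRing K]

/-- The additive polynomial `L(x) = (x² + x)² + (x² + x) (b² + b)` through which `R_{a,b}`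
factors. -/
def lMap (b x : K) : K := (x ^ 2 + x) ^ 2 + (x ^ 2 + x) * (b ^ 2 + b)

/-- The map `R_{a,b}` of the paper over an arbitrary commutative ring. -/
def rMap (a b x : K) : K :=
  a ^ 30 * (b ^ 2 + b) ^ 6 * lMap b x ^ 4 + a ^ 15 * (b ^ 2 + b) ^ 5 * lMap b x

lemma rMap_eq_of_cube_eq {a b i : K} (hi : i ^ 3 = a ^ 15 * (b ^ 2 + b)) (x : K) :
    rMap a b x = ((b ^ 2 + b) ^ 2 * i) ^ 2 * ((i * lMap b x) ^ 4 + i * lMap b x) := by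
  calc
    rMap a b x = (b ^ 2 + b) ^ 4 * ((a ^ 15 * (b ^ 2 + b)) ^ 2 * lMap b x ^ 4 +
        a ^ 15 * (b ^ 2 + b) * lMap b x) := by unfold rMap; ring
    _ = _ := by rw [← hi]; ring

variable [CharP K 2]

lemma lMap_add (b x y : K) : lMap b (x + y) = lMap b x + lMap b y := by
  unfold lMap
  simp only [CharTwo.add_sq]
  ring

lemma rMap_add (a b x y : K) : rMap a b (x + y) = rMap a b x + rMap a b y := by
  have add_pow_four (u v : K) : (u + v) ^ 4 = u ^ 4 + v ^ 4 :=
    add_pow_char_pow (p := 2) (n := 2) u v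
  unfold rMap
  rw [lMap_add, add_pow_four]
  ring

lemma lMap_eq_prod (b x : K) : lMap b x = x * (x + 1) * (x + b) * (x + (b + 1)) := by
  unfold lMap
  linear_combination (-x ^ 3 * b - x ^ 2 * b) * CharTwo.two_eq_zero (R := K)

lemma exists_pow_four_add_eq {w s : K} (h : w ^ 4 + w = s ^ 2) : ∃ m, m ^ 4 + m = s := by
  -- The equation itself makes `w` a square, so `K` need not be perfect.
  have hw : (w ^ 2 + s) ^ 2 = w := by
    linear_combination CharTwo.add_sq (w ^ 2) s - h + w ^ 4 * CharTwo.two_eq_zero (R := K)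
  refine ⟨w ^ 2 + s, ?_⟩
  linear_combination ((w ^ 2 + s) ^ 2 + w) * hw + w ^ 2 * CharTwo.two_eq_zero (R := K)

lemma exists_lMap_eq {b m k : K} (h : k ^ 4 + k = b ^ 2 * (m ^ 4 + m)) :
    ∃ x, lMap b x = (b ^ 2 + b) ^ 2 * (m ^ 4 + m) := by
  have sq_add_self (y : K) : (y ^ 2 + y) ^ 2 + (y ^ 2 + y) = y ^ 4 + y := by
    linear_combination CharTwo.add_sq (y ^ 2) y + y ^ 2 * CharTwo.two_eq_zero (R := K)
  set u := m ^ 2 + m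
  set x := b * u + (k ^ 2 + k)
  have hx : x ^ 2 + x = (b ^ 2 + b) * u := by
    linear_combination CharTwo.add_sq (b * u) (k ^ 2 + k) + sq_add_self k + h -
      b ^ 2 * sq_add_self m + b ^ 2 * u ^ 2 * CharTwo.two_eq_zero (R := K)
  refine ⟨x, ?_⟩
  rw [lMap, hx, ← sq_add_self m]
  ring

end CommRing

section Field

variable {K : Type*} [Field K]

/-- The map `Q_{a,b}` of the paper over an arbitrary field. -/
def qMap (a b x : K) : K := ((b ^ 2 + b)⁻¹) ^ 4 * rMap a b x * (rMap a b x + 1)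

/-- The map `P_{a,b}` of the paper over an arbitrary field. -/
def pMap (a b x : K) : K := qMap a b x * (qMap a b x + 1)

variable [CharP K 2] {a b : K}

lemma sq_add_self_ne_zero (hb0 : b ≠ 0) (hb1 : b ≠ 1) : b ^ 2 + b ≠ 0 := by
  rw [sq, ← mul_add_one]
  exact mul_ne_zero hb0 (mt CharTwo.add_eq_zero.mp hb1)

lemma setOf_lMap_eq_zero (b : K) : {x | lMap b x = 0} = {0, 1, b, b + 1} := by
  ext x
  simp [lMap_eq_prod, CharTwo.add_eq_zero, or_assoc]

lemma ncard_lMap_eq_zero (hb0 : b ≠ 0) (hb1 : b ≠ 1) : {x | lMap b x = 0}.ncard = 4 := by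
  classical
  have hb : b + 1 ≠ 0 := mt CharTwo.add_eq_zero.mp hb1
  rw [setOf_lMap_eq_zero, Set.ncard_eq_toFinset_card']
  simp [Finset.card_insert_of_notMem, hb0.symm, hb1.symm, hb0, hb.symm]

lemma pMap_eq_prod (a : K) (hb : b ^ 2 + b ≠ 0) (x : K) :
    pMap a b x = ((b ^ 2 + b)⁻¹) ^ 8 *
      (rMap a b x * (rMap a b x + 1) * (rMap a b x + b ^ 4) * (rMap a b x + (1 + b ^ 4))) := by
  have hc : (b ^ 2 + b) ^ 4 = b ^ 8 + b ^ 4 := by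
    linear_combination (2 * b ^ 7 + 3 * b ^ 6 + 2 * b ^ 5) * CharTwo.two_eq_zero (R := K)
  have hinv : ((b ^ 2 + b)⁻¹) ^ 4 * (b ^ 8 + b ^ 4) = 1 := by
    rw [← hc, ← mul_pow, inv_mul_cancel₀ hb, one_pow]
  have hQ : qMap a b x + 1 =
      ((b ^ 2 + b)⁻¹) ^ 4 * ((rMap a b x + b ^ 4) * (rMap a b x + (1 + b ^ 4))) := by
    unfold qMap
    linear_combination -hinv -
      ((b ^ 2 + b)⁻¹) ^ 4 * rMap a b x * b ^ 4 * CharTwo.two_eq_zero (R := K)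
  rw [pMap, hQ, qMap]
  ring

lemma setOf_pMap_eq_zero (a : K) (hb : b ^ 2 + b ≠ 0) :
    {x | pMap a b x = 0} = rMap a b ⁻¹' {0, 1, b ^ 4, 1 + b ^ 4} := by
  ext x
  simp [pMap_eq_prod a hb, hb, CharTwo.add_eq_zero, or_assoc]

lemma exists_pow_four_add_eq_div {i x r : K} (hi : i ^ 3 = a ^ 15 * (b ^ 2 + b))
    (hne : (b ^ 2 + b) ^ 2 * i ≠ 0) (hx : rMap a b x = r ^ 2) :
    ∃ m, m ^ 4 + m = r / ((b ^ 2 + b) ^ 2 * i) := by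
  refine exists_pow_four_add_eq (w := i * lMap b x) ?_
  rw [div_pow, ← hx, rMap_eq_of_cube_eq hi, mul_div_cancel_left₀ _ (pow_ne_zero 2 hne)]

lemma exists_rMap_eq_zero_and_lMap_ne_zero {i x y : K} (hi : i ^ 3 = a ^ 15 * (b ^ 2 + b))
    (hne : (b ^ 2 + b) ^ 2 * i ≠ 0) (hx : rMap a b x = 1) (hy : rMap a b y = b ^ 4) :
    ∃ z, rMap a b z = 0 ∧ lMap b z ≠ 0 := by
  obtain ⟨m, hm⟩ := exists_pow_four_add_eq_div hi hne (hx.trans (one_pow 2).symm)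
  obtain ⟨k, hk⟩ := exists_pow_four_add_eq_div (r := b ^ 2) hi hne (by rw [hy]; ring)
  have hkm : k ^ 4 + k = b ^ 2 * (m ^ 4 + m) := by rw [hk, hm, mul_one_div]
  obtain ⟨z, hz⟩ := exists_lMap_eq hkm
  have hiz : i * lMap b z = 1 := by
    rw [hz, hm, mul_left_comm, ← mul_assoc, mul_one_div_cancel hne]
  refine ⟨z, ?_, right_ne_zero_of_mul_eq_one hiz⟩
  rw [rMap_eq_of_cube_eq hi, hiz, one_pow, CharTwo.add_self_eq_zero, mul_zero]

lemma setOf_rMap_eq_zero (hb0 : b ≠ 0) (hb1 : b ≠ 1) (hR : {x | rMap a b x = 0}.ncard = 4) :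
    {x | rMap a b x = 0} = {x | lMap b x = 0} := by
  have hsub : {x | lMap b x = 0} ⊆ {x | rMap a b x = 0} := by
    intro x (hx : lMap b x = 0)
    simp [rMap, hx]
  have hfin : {x | rMap a b x = 0}.Finite := Set.finite_of_ncard_ne_zero (by simp [hR])
  refine (Set.eq_of_subset_of_ncard_le hsub ?_ hfin).symm
  rw [hR, ncard_lMap_eq_zero hb0 hb1]

theorem Ppoly_roots_le_eight_general (ha : a ≠ 0) (hb0 : b ≠ 0) (hb1 : b ≠ 1)
    (hcube : ∃ d, d ^ 3 = b ^ 2 + b) (hR : {x | rMap a b x = 0}.ncard = 4) :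
    {x | pMap a b x = 0}.ncard ≤ 8 := by
  have hc : b ^ 2 + b ≠ 0 := sq_add_self_ne_zero hb0 hb1
  let R : K →+ K := AddMonoidHom.mk' (rMap a b) (rMap_add a b)
  have hnot_both : 1 ∈ R.range → b ^ 4 ∉ R.range := by
    rintro ⟨x, hx⟩ ⟨y, hy⟩
    obtain ⟨d, hd⟩ := hcube
    have hd0 : d ≠ 0 := by rintro rfl; exact hc (by simp [← hd])
    obtain ⟨z, hRz, hLz⟩ := exists_rMap_eq_zero_and_lMap_ne_zero (i := a ^ 5 * d)
      (by rw [← hd]; ring) (by simp [hc, ha, hd0]) hx hy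
    exact hLz ((setOf_rMap_eq_zero hb0 hb1 hR).subset hRz)
  have hrange : ({0, 1, b ^ 4, 1 + b ^ 4} ∩ Set.range R).ncard ≤ 2 := by
    obtain ⟨y, hy⟩ := exists_inter_subset_pair R.range hnot_both
    calc
      _ ≤ ({0, y} : Set K).ncard := Set.ncard_le_ncard hy (Set.toFinite _)
      _ ≤ 2 := by simpa using Set.ncard_insert_le 0 {y}
  calc
    {x | pMap a b x = 0}.ncard = (R ⁻¹' {0, 1, b ^ 4, 1 + b ^ 4}).ncard := by
      rw [setOf_pMap_eq_zero a hc]; rfl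
    _ = ({0, 1, b ^ 4, 1 + b ^ 4} ∩ Set.range R).ncard * Nat.card R.ker :=
      ncard_preimage_eq_mul_card_ker R _
    _ ≤ 2 * 4 := Nat.mul_le_mul hrange hR.le

end Field

/-- Odd `n`: exactly 4 roots of `R_{a,b}` implies at most 8 roots of `P_{a,b}`. -/
theorem Ppoly_roots_le_eight (n : ℕ) (hn : 0 < n) (hodd : Odd n)
    (a b : Fq n) (ha : a ≠ 0) (hb0 : b ≠ 0) (hb1 : b ≠ 1)
    (hR : {x : Fq n | Rpoly a b x = 0}.ncard = 4) :
    {x : Fq n | Ppoly a b x = 0}.ncard ≤ 8 :=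
  Ppoly_roots_le_eight_general ha hb0 hb1 (exists_cube_eq_of_odd hodd _) hR
end
end
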